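/- arXiv:2511.09177 — 3 statements merged into one kernel-verified Lean document; each statement's English description precedes it below -/
import Mathlib

section
/- Newton's problem of least resistance admits a solution in the class of concave functions: for every M > 0 there exists a concave function u : Ω → [0, M] on the open unit disc Ω ⊂ ℝ² such that J(u) ≤ J(v) for every concave function v : Ω → [0, M], where J(u) = ∫_Ω 1/(|∇u(x)|² + 1) dx. -/
open Set MeasureTheory

/-- The open unit disc in `ℝ²`. -/
noncomputable def Omega : Set (EuclideanSpace ℝ (Fin 2)) :=
  Metric.ball (0 : EuclideanSpace ℝ (Fin 2)) 1

/-- Newton's resistance functional `J(u) = ∫_Ω 1/(|∇u|² + 1) dx`. -/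
noncomputable def J (u : EuclideanSpace ℝ (Fin 2) → ℝ) : ℝ :=
  ∫ x in Omega, 1 / (‖gradient u x‖ ^ 2 + 1)

/-! Direct method. Concave functions with values in a fixed interval are locally equi-Lipschitz, so
by Arzelà–Ascoli a minimizing sequence has a pointwise convergent subsequence, with a concave limit.
The integrand is not convex in the gradient, so weak lower semicontinuity is not available; instead,
concavity upgrades pointwise convergence of the functions to convergence of their derivatives: the
tangent inequality bounds the derivatives below, in the limit, by the slopes of the limit function,
and applying this in opposite directions determines them. Since concave functions are
differentiable almost everywhere, dominated convergence makes the functional continuous along the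
subsequence. -/

open Filter Topology

section Concave

variable {E ι : Type*} [NormedAddCommGroup E] [NormedSpace ℝ E] {s : Set E}

theorem concaveOn_of_forall_tendsto {l : Filter ι} [l.NeBot] {F : ι → E → ℝ} {f : E → ℝ}
    (hF : ∀ n, ConcaveOn ℝ s (F n)) (hlim : ∀ x ∈ s, Tendsto (F · x) l (𝓝 (f x))) :
    ConcaveOn ℝ s f := by
  obtain ⟨n⟩ := l.nonempty_of_neBot
  have hs : Convex ℝ s := (hF n).1
  refine ⟨hs, fun x hx y hy a b ha hb hab ↦ ?_⟩
  exact le_of_tendsto_of_tendsto' (((hlim x hx).const_smul a).add ((hlim y hy).const_smul b))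
    (hlim _ (hs hx hy ha hb hab)) fun n ↦ (hF n).2 hx hy ha hb hab

theorem equicontinuousOn_of_concaveOn_of_locally_bounded (hs : IsOpen s) {F : ι → E → ℝ}
    (hF : ∀ i, ConcaveOn ℝ s (F i)) (hbdd : ∀ x ∈ s, ∃ M, ∀ᶠ y in 𝓝 x, ∀ i, |F i y| ≤ M) :
    EquicontinuousOn F s := by
  intro x hx
  obtain ⟨M, hM⟩ := hbdd x hx
  obtain ⟨r, hr, hball⟩ := Metric.eventually_nhds_iff_ball.1 (hM.and (hs.mem_nhds hx))
  have hLip (i : ι) :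
      LipschitzOnWith (2 * M / (r / 2)).toNNReal (F i) (Metric.ball x (r - r / 2)) :=
    ((hF i).subset (fun y hy ↦ (hball y hy).2) (convex_ball x r)).lipschitzOnWith_of_abs_le
      (half_pos hr) fun y hy ↦ (hball y hy).1 i
  have hnhds : Metric.ball x (r - r / 2) ∈ 𝓝 x := Metric.ball_mem_nhds x (by linarith)
  have hequi := (LipschitzOnWith.uniformEquicontinuousOn F _ hLip).equicontinuousOn x
    (mem_of_mem_nhds hnhds)
  rw [EquicontinuousWithinAt, nhdsWithin_eq_nhds.2 hnhds] at hequi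
  exact fun U hU ↦ nhdsWithin_le_nhds (hequi U hU)

theorem le_add_of_concaveOn_of_hasFDerivAt {f : E → ℝ} {f' : E →L[ℝ] ℝ} {x y : E}
    (hf : ConcaveOn ℝ s f) (hx : x ∈ s) (hy : y ∈ s) (hf' : HasFDerivAt f f' x) :
    f y ≤ f x + f' (y - x) := by
  have hline : HasDerivAt (f ∘ AffineMap.lineMap x y) (f' (y - x)) (0 : ℝ) :=
    HasFDerivAt.comp_hasDerivAt 0 (by simpa using hf') AffineMap.hasDerivAt_lineMap
  have hslope := (hf.comp_affineMap (AffineMap.lineMap x y)).slope_le_of_hasDerivAt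
    (by simpa using hx) (by simpa using hy) zero_lt_one hline
  simp only [slope_def_field, Function.comp_apply, AffineMap.lineMap_apply_one,
    AffineMap.lineMap_apply_zero, sub_zero, div_one] at hslope
  linarith

section DerivLimit

variable {l : Filter ι} {F : ι → E → ℝ} {f : E → ℝ} {F' : ι → E →L[ℝ] ℝ} {f' : E →L[ℝ] ℝ} {x : E}

theorem eventually_lt_hasFDerivAt_apply_of_concaveOn (hs : IsOpen s) (hx : x ∈ s)
    (hF : ∀ n, ConcaveOn ℝ s (F n)) (hlim : ∀ y ∈ s, Tendsto (F · y) l (𝓝 (f y)))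
    (hF' : ∀ n, HasFDerivAt (F n) (F' n) x) (hf' : HasFDerivAt f f' x) {v : E} {c : ℝ}
    (hc : c < f' v) : ∀ᶠ n in l, c < F' n v := by
  have hslope : ∀ᶠ t : ℝ in 𝓝[>] 0, c < t⁻¹ • (f (x + t • v) - f x) :=
    (hf'.hasLineDerivAt v).tendsto_slope_zero_right.eventually_const_lt hc
  have hmem : ∀ᶠ t : ℝ in 𝓝[>] 0, x + t • v ∈ s := by
    have hcont : ContinuousAt (fun t : ℝ ↦ x + t • v) 0 := by fun_prop
    exact nhdsWithin_le_nhds (hcont (hs.mem_nhds (by simpa using hx)))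
  obtain ⟨t, ⟨hct, hts⟩, ht : 0 < t⟩ := ((hslope.and hmem).and self_mem_nhdsWithin).exists
  have hlimslope : Tendsto (fun n ↦ t⁻¹ • (F n (x + t • v) - F n x)) l
      (𝓝 (t⁻¹ • (f (x + t • v) - f x))) :=
    ((hlim _ hts).sub (hlim x hx)).const_smul t⁻¹
  filter_upwards [hlimslope.eventually_const_lt hct] with n hn
  have htangent : F n (x + t • v) ≤ F n x + t * F' n v := by
    simpa using le_add_of_concaveOn_of_hasFDerivAt (hF n) hx hts (hF' n)
  refine hn.trans_le ?_
  rw [smul_eq_mul, inv_mul_le_iff₀ ht]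
  linarith

theorem tendsto_hasFDerivAt_apply_of_concaveOn (hs : IsOpen s) (hx : x ∈ s)
    (hF : ∀ n, ConcaveOn ℝ s (F n)) (hlim : ∀ y ∈ s, Tendsto (F · y) l (𝓝 (f y)))
    (hF' : ∀ n, HasFDerivAt (F n) (F' n) x) (hf' : HasFDerivAt f f' x) (v : E) :
    Tendsto (fun n ↦ F' n v) l (𝓝 (f' v)) := by
  have hlower {w : E} {c : ℝ} (hc : c < f' w) : ∀ᶠ n in l, c < F' n w :=
    eventually_lt_hasFDerivAt_apply_of_concaveOn hs hx hF hlim hF' hf' hc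
  refine tendsto_order.2 ⟨fun c hc ↦ hlower hc, fun c hc ↦ ?_⟩
  have hneg : -c < f' (-v) := by simpa using hc
  simpa using hlower hneg

end DerivLimit

end Concave

theorem tendsto_clm_of_forall_tendsto_apply {𝕜 E F ι : Type*} [NontriviallyNormedField 𝕜]
    [CompleteSpace 𝕜] [NormedAddCommGroup E] [NormedSpace 𝕜 E] [FiniteDimensional 𝕜 E]
    [NormedAddCommGroup F] [NormedSpace 𝕜 F] {l : Filter ι} {T : ι → E →L[𝕜] F} {T₀ : E →L[𝕜] F}
    (h : ∀ v, Tendsto (fun n ↦ T n v) l (𝓝 (T₀ v))) : Tendsto T l (𝓝 T₀) := by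
  let e : (E →L[𝕜] F) ≃L[𝕜] Fin (Module.finrank 𝕜 E) → F :=
    ((ContinuousLinearEquiv.ofFinrankEq (Module.finrank_fin_fun 𝕜).symm).arrowCongr
      (1 : F ≃L[𝕜] F)).trans (ContinuousLinearEquiv.piRing _)
  exact e.toHomeomorph.isInducing.tendsto_nhds_iff.2 (tendsto_pi_nhds.2 fun i ↦ h _)

theorem ae_differentiableAt_of_locallyLipschitzOn {E F : Type*} [NormedAddCommGroup E]
    [NormedSpace ℝ E] [FiniteDimensional ℝ E] [MeasurableSpace E] [BorelSpace E]
    [NormedAddCommGroup F] [NormedSpace ℝ F] [FiniteDimensional ℝ F] {μ : Measure E}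
    [μ.IsAddHaarMeasure] {s : Set E} {f : E → F} (hs : IsOpen s) (hf : LocallyLipschitzOn s f) :
    ∀ᵐ x ∂μ, x ∈ s → DifferentiableAt ℝ f x := by
  rw [ae_iff]
  refine measure_null_of_locally_null _ fun x hx ↦ ?_
  obtain ⟨hxs, -⟩ : x ∈ s ∧ ¬DifferentiableAt ℝ f x := by simpa using hx
  obtain ⟨K, t, ht, hK⟩ := hf hxs
  rw [hs.nhdsWithin_eq hxs] at ht
  refine ⟨_, inter_mem_nhdsWithin _ (interior_mem_nhds.2 ht), measure_mono_null ?_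
    (ae_iff.1 (hK.mono interior_subset).ae_differentiableWithinAt_of_mem)⟩
  rintro y ⟨hy, hyt⟩ hdiff
  exact hy fun _ ↦ (hdiff hyt).differentiableAt (isOpen_interior.mem_nhds hyt)

theorem exists_subseq_tendsto_of_equicontinuous {X α : Type*} [TopologicalSpace X]
    [WeaklyLocallyCompactSpace X] [SigmaCompactSpace X] [UniformSpace α]
    [IsCountablyGenerated (uniformity α)] {F : ℕ → X → α} (hF : Equicontinuous F)
    (hcompact : ∀ x, ∃ K, IsCompact K ∧ ∀ n, F n x ∈ K) :
    ∃ (f : X → α) (φ : ℕ → ℕ), StrictMono φ ∧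
      ∀ x, Tendsto (fun n ↦ F (φ n) x) atTop (𝓝 (f x)) := by
  choose K hK hFK using hcompact
  have hequi : (closure (range F)).Equicontinuous :=
    Set.Equicontinuous.closure (equicontinuous_iff_range.1 hF)
  have hpointwise : IsCompact (closure (range F)) :=
    (isCompact_univ_pi hK).closure_of_subset (range_subset_iff.2 fun n x _ ↦ hFK x n)
  let S : Set C(X, α) := {g | ⇑g ∈ closure (range F)}
  have himage : ContinuousMap.toFun '' S = closure (range F) := by
    refine Subset.antisymm (image_subset_iff.2 fun g hg ↦ hg) fun g hg ↦ ?_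
    exact ⟨⟨g, hequi.continuous ⟨g, hg⟩⟩, hg, rfl⟩
  have hS : IsCompact S := ArzelaAscoli.isCompact_of_equicontinuous S (himage ▸ hpointwise)
    (hequi.comp fun g : S ↦ ⟨g, g.2⟩)
  obtain ⟨f, -, φ, hφ, hlim⟩ := hS.tendsto_subseq
    (x := fun n ↦ ⟨F n, hF.continuous n⟩) fun n ↦ subset_closure (mem_range_self n)
  exact ⟨f, φ, hφ, fun x ↦ ((continuous_eval_const x).tendsto f).comp hlim⟩

section VariationalProblem

variable {E : Type*} [NormedAddCommGroup E] [NormedSpace ℝ E] {s : Set E}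

/-- The class of concave functions `s → [a, b]`. They are encoded as functions on the whole space,
whose values outside `s` are arbitrary. -/
def boundedConcaveOn (s : Set E) (a b : ℝ) : Set (E → ℝ) :=
  {u | ConcaveOn ℝ s u ∧ ∀ x ∈ s, u x ∈ Icc a b}

/-- The functional `u ↦ ∫_s g(∇u) dμ` of the calculus of variations, for a Lagrangian `g` that
depends on the derivative only, taken as an element of the dual space. -/
noncomputable def derivIntegral [MeasurableSpace E] (μ : Measure E) (s : Set E)
    (g : (E →L[ℝ] ℝ) → ℝ) (u : E → ℝ) : ℝ :=
  ∫ x in s, g (fderiv ℝ u x) ∂μ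

theorem boundedConcaveOn_nonempty {a b : ℝ} (hs : Convex ℝ s) (hab : a ≤ b) :
    (boundedConcaveOn s a b).Nonempty :=
  ⟨fun _ ↦ a, concaveOn_const a hs, fun _ _ ↦ left_mem_Icc.2 hab⟩

variable [FiniteDimensional ℝ E]

theorem exists_subseq_tendsto_of_mem_boundedConcaveOn (hs : IsOpen s) {a b : ℝ}
    {F : ℕ → E → ℝ} (hF : ∀ n, F n ∈ boundedConcaveOn s a b) :
    ∃ u ∈ boundedConcaveOn s a b, ∃ φ : ℕ → ℕ, StrictMono φ ∧
      ∀ x ∈ s, Tendsto (fun n ↦ F (φ n) x) atTop (𝓝 (u x)) := by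
  have hequi : EquicontinuousOn F s := by
    refine equicontinuousOn_of_concaveOn_of_locally_bounded hs (fun n ↦ (hF n).1) fun x hx ↦
      ⟨max |a| |b|, ?_⟩
    filter_upwards [hs.mem_nhds hx] with y hy n
    exact abs_le_max_abs_abs ((hF n).2 y hy).1 ((hF n).2 y hy).2
  have := hs.locallyCompactSpace
  obtain ⟨f, φ, hφ, hlim⟩ := exists_subseq_tendsto_of_equicontinuous
    ((equicontinuous_restrict_iff F).2 hequi)
    fun x ↦ ⟨Icc a b, isCompact_Icc, fun n ↦ (hF n).2 x x.2⟩
  have hpointwise (x : E) (hx : x ∈ s) : ∃ y, Tendsto (fun n ↦ F (φ n) x) atTop (𝓝 y) :=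
    ⟨f ⟨x, hx⟩, hlim ⟨x, hx⟩⟩
  choose! u hu using hpointwise
  refine ⟨u, ⟨concaveOn_of_forall_tendsto (fun n ↦ (hF (φ n)).1) hu, fun x hx ↦ ?_⟩, φ, hφ, hu⟩
  exact isClosed_Icc.mem_of_tendsto (hu x hx) (.of_forall fun n ↦ (hF (φ n)).2 x hx)

variable [MeasurableSpace E] [BorelSpace E] {μ : Measure E} [μ.IsAddHaarMeasure]
  {g : (E →L[ℝ] ℝ) → ℝ} {C : ℝ}

theorem tendsto_derivIntegral_of_concaveOn (hs : IsOpen s) (hμ : μ s ≠ ⊤) (hg : Continuous g)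
    (hC : ∀ p, ‖g p‖ ≤ C) {F : ℕ → E → ℝ} {f : E → ℝ} (hF : ∀ n, ConcaveOn ℝ s (F n))
    (hlim : ∀ x ∈ s, Tendsto (fun n ↦ F n x) atTop (𝓝 (f x))) :
    Tendsto (fun n ↦ derivIntegral μ s g (F n)) atTop (𝓝 (derivIntegral μ s g f)) := by
  have hae {u : E → ℝ} (hu : ConcaveOn ℝ s u) : ∀ᵐ x ∂μ, x ∈ s → DifferentiableAt ℝ u x :=
    ae_differentiableAt_of_locallyLipschitzOn hs (hu.locallyLipschitzOn hs)
  refine tendsto_integral_of_dominated_convergence (fun _ ↦ C)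
    (fun n ↦ (hg.measurable.comp (measurable_fderiv ℝ (F n))).aestronglyMeasurable)
    (integrableOn_const hμ) (fun n ↦ ae_of_all _ fun x ↦ hC _) ?_
  rw [ae_restrict_iff' hs.measurableSet]
  filter_upwards [ae_all_iff.2 fun n ↦ hae (hF n), hae (concaveOn_of_forall_tendsto hF hlim)]
    with x hFx hfx hx
  have hderiv : Tendsto (fun n ↦ fderiv ℝ (F n) x) atTop (𝓝 (fderiv ℝ f x)) :=
    tendsto_clm_of_forall_tendsto_apply (tendsto_hasFDerivAt_apply_of_concaveOn hs hx hF hlim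
      (fun n ↦ (hFx n hx).hasFDerivAt) (hfx hx).hasFDerivAt)
  exact (hg.tendsto _).comp hderiv

theorem isCompact_derivIntegral_image_boundedConcaveOn (hs : IsOpen s) (hμ : μ s ≠ ⊤)
    (hg : Continuous g) (hC : ∀ p, ‖g p‖ ≤ C) (a b : ℝ) :
    IsCompact (derivIntegral μ s g '' boundedConcaveOn s a b) := by
  refine IsSeqCompact.isCompact fun y hy ↦ ?_
  choose F hF hFy using hy
  obtain ⟨u, hu, φ, hφ, hlim⟩ := exists_subseq_tendsto_of_mem_boundedConcaveOn hs hF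
  refine ⟨_, mem_image_of_mem _ hu, φ, hφ, ?_⟩
  simpa only [Function.comp_def, hFy] using
    tendsto_derivIntegral_of_concaveOn hs hμ hg hC (fun n ↦ (hF (φ n)).1) hlim

theorem newton_problem_has_minimizer_general (hs : IsOpen s) (hconv : Convex ℝ s) (hμ : μ s ≠ ⊤)
    (hg : Continuous g) (hC : ∀ p, ‖g p‖ ≤ C) {a b : ℝ} (hab : a ≤ b) :
    ∃ u ∈ boundedConcaveOn s a b,
      IsMinOn (derivIntegral μ s g) (boundedConcaveOn s a b) u :=
  let ⟨_, ⟨u, hu, hJu⟩, hmin⟩ := (isCompact_derivIntegral_image_boundedConcaveOn hs hμ hg hC a b)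
    |>.exists_isLeast ((boundedConcaveOn_nonempty hconv hab).image _)
  ⟨u, hu, fun _ hv ↦ hJu.trans_le (hmin (mem_image_of_mem _ hv))⟩

end VariationalProblem

section Newton

variable {V : Type*} [SeminormedAddCommGroup V]

/-- Newton's resistance density `p ↦ 1/(|p|² + 1)`, on a space `V` of gradients or of
derivatives. -/
noncomputable def resistanceDensity (p : V) : ℝ :=
  1 / (‖p‖ ^ 2 + 1)

theorem continuous_resistanceDensity : Continuous (resistanceDensity : V → ℝ) :=
  continuous_const.div (by fun_prop) fun p ↦ by positivity

theorem norm_resistanceDensity_le_one (p : V) : ‖resistanceDensity p‖ ≤ 1 := by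
  rw [resistanceDensity, Real.norm_of_nonneg (by positivity)]
  exact div_le_one_of_le₀ (le_add_of_nonneg_left (sq_nonneg _)) (by positivity)

theorem J_eq_derivIntegral (u : EuclideanSpace ℝ (Fin 2) → ℝ) :
    J u = derivIntegral volume Omega resistanceDensity u := by
  simp only [J, derivIntegral, resistanceDensity, gradient, LinearIsometryEquiv.norm_map]

end Newton

/-- Newton's problem of least resistance admits a solution in the class of
concave functions `u : Ω → [0, M]`. -/
theorem newton_problem_has_minimizer (M : ℝ) (hM : 0 < M) :
    ∃ u : EuclideanSpace ℝ (Fin 2) → ℝ,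
      ConcaveOn ℝ Omega u ∧ (∀ x ∈ Omega, u x ∈ Icc 0 M) ∧
      ∀ v : EuclideanSpace ℝ (Fin 2) → ℝ,
        ConcaveOn ℝ Omega v → (∀ x ∈ Omega, v x ∈ Icc 0 M) →
        J u ≤ J v := by
  obtain ⟨u, ⟨hu, huM⟩, hmin⟩ := newton_problem_has_minimizer_general (μ := volume)
    (s := Omega) Metric.isOpen_ball (convex_ball 0 1) measure_ball_lt_top.ne
    continuous_resistanceDensity norm_resistanceDensity_le_one hM.le
  exact ⟨u, hu, huM, fun v hv hvM ↦ by
    simpa only [J_eq_derivIntegral] using isMinOn_iff.1 hmin v ⟨hv, hvM⟩⟩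
end

section
/- A minimizer of Newton's problem vanishes at the boundary: if u : Ω → [0, M] is concave and minimizes J over all concave functions v : Ω → [0, M], then for every boundary point x₀ with |x₀| = 1, u(x) tends to 0 as x tends to x₀ within Ω. -/
open Set MeasureTheory

/-!
If `c = limsup u` were positive at `x₀`, cut the graph of `u` by a steep plane of slope `k` through
`(x₀, 0)`. Over the cap `V` which is cut off the new resistance is `|V| / (k² + 1)`. As `k → ∞`,
`V` shrinks to `x₀`, so that `u ≤ (1 + l / 2) c` on `V`, while concavity makes `u` almost as
large as `(1 - l) c` on a copy of `V` scaled by a small `l`. Hence `|∇u| ≤ A l k` on that copy,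
with `A` independent of `l` and `k`, and the copy alone contributes about `l² |V| / (A l k)²` to
the resistance of `u`. The constant `A⁻²` could be too small. Since `V` is thin in the normal
direction `n`, the copy may moreover be stretched by the factor `1 + 2 A²` along `n`, for `l` small
enough, and this wins.
-/

open Filter Metric Module
open scoped Topology InnerProductSpace

section Gradient

variable {E : Type*} [NormedAddCommGroup E] [InnerProductSpace ℝ E] [CompleteSpace E]

lemma norm_gradient_eq_norm_fderiv (f : E → ℝ) (x : E) : ‖gradient f x‖ = ‖fderiv ℝ f x‖ := by
  rw [← toDual_gradient, LinearIsometryEquiv.norm_map]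

lemma measurable_norm_gradient [MeasurableSpace E] [OpensMeasurableSpace E] (f : E → ℝ) :
    Measurable fun x ↦ ‖gradient f x‖ := by
  simp_rw [norm_gradient_eq_norm_fderiv]
  exact (measurable_fderiv ℝ f).norm

lemma norm_gradient_le_of_concaveOn_ball {f : E → ℝ} {z : E} {r a b : ℝ} (hr : 0 < r)
    (hf : ConcaveOn ℝ (ball z r) f) (hfab : ∀ x ∈ ball z r, f x ∈ Icc a b) :
    ‖gradient f z‖ ≤ 4 * (b - a) / r := by
  have hab : a ≤ b := (hfab z (mem_ball_self hr)).1.trans (hfab z (mem_ball_self hr)).2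
  have hconc : ConcaveOn ℝ (ball z r) fun x ↦ f x + -a := hf.add_const (-a)
  have hlip := hconc.lipschitzOnWith_of_abs_le (half_pos hr) (M := b - a)
    fun x hx ↦ abs_le.2 ⟨by linarith [(hfab x hx).1], by linarith [(hfab x hx).2]⟩
  have h := norm_fderiv_le_of_lipschitzOn ℝ (ball_mem_nhds z (by linarith)) hlip
  rw [fderiv_add_const, Real.coe_toNNReal _ (div_nonneg (by linarith) (by linarith))] at h
  calc ‖gradient f z‖ = ‖fderiv ℝ f z‖ := norm_gradient_eq_norm_fderiv f z
    _ ≤ 2 * (b - a) / (r / 2) := h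
    _ = 4 * (b - a) / r := by field

end Gradient

section ConcaveFunctions

variable {E : Type*} [NormedAddCommGroup E] [NormedSpace ℝ E]

open scoped Pointwise in
lemma exists_mem_ball_add_smul_eq {w p z : E} {t ρ : ℝ} (ht : 0 < t)
    (hz : z ∈ ball (w + t • p) (t * ρ)) : ∃ q ∈ ball p ρ, w + t • q = z := by
  have hball : ball (w + t • p) (t * ρ) = w +ᵥ t • ball p ρ := by
    rw [_root_.smul_ball ht.ne', vadd_ball, vadd_eq_add, Real.norm_of_nonneg ht.le]
  rw [hball] at hz
  obtain ⟨_, ⟨q, hq, rfl⟩, rfl⟩ := hz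
  exact ⟨q, hq, rfl⟩

lemma mem_and_le_of_concaveOn_of_mem_ball {V : Set E} {f : E → ℝ} {p y x : E} {a l ρ : ℝ}
    (hf : ConcaveOn ℝ V f) (hpV : ball p ρ ⊆ V) (ha : ∀ x ∈ ball p ρ, a ≤ f x)
    (hy : y ∈ V) (hfy : 0 ≤ f y) (hl₀ : 0 ≤ l) (hl₁ : l < 1)
    (hx : x ∈ ball ((1 - l) • p + l • y) ((1 - l) * ρ)) : x ∈ V ∧ (1 - l) * a ≤ f x := by
  rw [add_comm] at hx
  obtain ⟨q, hq, rfl⟩ := exists_mem_ball_add_smul_eq (sub_pos.2 hl₁) hx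
  refine ⟨hf.1 hy (hpV hq) hl₀ (sub_nonneg.2 hl₁.le) (by ring), ?_⟩
  calc (1 - l) * a ≤ l * f y + (1 - l) * f q :=
        le_add_of_nonneg_of_le (mul_nonneg hl₀ hfy)
          (mul_le_mul_of_nonneg_left (ha q hq) (sub_nonneg.2 hl₁.le))
    _ ≤ f (l • y + (1 - l) • q) := hf.2 hy (hpV hq) hl₀ (sub_nonneg.2 hl₁.le) (by ring)

lemma combo_mem_of_mem_closure {Ω : Set E} {x₀ y : E} {t : ℝ} (hΩ : IsOpen Ω) (hc : Convex ℝ Ω)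
    (hx₀ : x₀ ∈ closure Ω) (hy : y ∈ Ω) (ht₀ : 0 < t) (ht₁ : t ≤ 1) :
    (1 - t) • x₀ + t • y ∈ Ω := by
  rw [← hΩ.interior_eq] at hy ⊢
  exact hc.combo_closure_interior_mem_interior hx₀ hy (sub_nonneg.2 ht₁) ht₀ (by ring)

lemma mul_limsup_le_of_concaveOn [FiniteDimensional ℝ E] {Ω : Set E} {u : E → ℝ} {x₀ y : E}
    {t : ℝ} (hΩ : IsOpen Ω) (hu : ConcaveOn ℝ Ω u) (hu₀ : ∀ x ∈ Ω, 0 ≤ u x)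
    (hx₀ : x₀ ∈ closure Ω) (hy : y ∈ Ω) (ht₀ : 0 < t) (ht₁ : t ≤ 1) :
    (1 - t) * limsup u (𝓝[Ω] x₀) ≤ u ((1 - t) • x₀ + t • y) := by
  have : (𝓝[Ω] x₀).NeBot := mem_closure_iff_nhdsWithin_neBot.1 hx₀
  have hmem : ∀ᶠ z in 𝓝[Ω] x₀, z ∈ Ω := self_mem_nhdsWithin
  have hcob : (𝓝[Ω] x₀).IsCoboundedUnder (· ≤ ·) u :=
    (isBoundedUnder_of_eventually_ge (hmem.mono hu₀)).isCoboundedUnder_le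
  have hp := combo_mem_of_mem_closure hΩ hu.1 hx₀ hy ht₀ ht₁
  have hlim : Tendsto (fun z ↦ u ((1 - t) • z + t • y)) (𝓝[Ω] x₀)
      (𝓝 (u ((1 - t) • x₀ + t • y))) :=
    ((hu.continuousOn hΩ).continuousAt (hΩ.mem_nhds hp)).tendsto.comp
      ((Continuous.tendsto (by fun_prop) x₀).mono_left nhdsWithin_le_nhds)
  refine le_of_forall_pos_sub_le fun ε hε ↦ ge_of_tendsto_of_frequently hlim ?_
  have hfreq : ∃ᶠ z in 𝓝[Ω] x₀, limsup u (𝓝[Ω] x₀) - ε < u z :=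
    frequently_lt_of_lt_limsup hcob (sub_lt_self _ hε)
  refine (hfreq.and_eventually hmem).mono ?_
  rintro z ⟨hz, hzΩ⟩
  calc (1 - t) * limsup u (𝓝[Ω] x₀) - ε ≤ (1 - t) * u z := by nlinarith
    _ ≤ (1 - t) * u z + t * u y := le_add_of_nonneg_right (mul_nonneg ht₀.le (hu₀ y hy))
    _ ≤ u ((1 - t) • z + t • y) := hu.2 hzΩ hy (sub_nonneg.2 ht₁) ht₀.le (by ring)

lemma tendsto_zero_of_limsup_nonpos {α : Type*} {F : Filter α} [F.NeBot] {u : α → ℝ} {M : ℝ}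
    (hu : ∀ᶠ x in F, u x ∈ Icc 0 M) (hlimsup : limsup u F ≤ 0) : Tendsto u F (𝓝 0) := by
  have hle : F.IsBoundedUnder (· ≤ ·) u :=
    isBoundedUnder_of_eventually_le (hu.mono fun _ hx ↦ hx.2)
  have hge : F.IsBoundedUnder (· ≥ ·) u :=
    isBoundedUnder_of_eventually_ge (hu.mono fun _ hx ↦ hx.1)
  exact tendsto_of_le_liminf_of_limsup_le
    (le_liminf_of_le hle.isCoboundedUnder_ge (hu.mono fun _ hx ↦ hx.1)) hlimsup hle hge

end ConcaveFunctions

section StretchedHomothety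

variable {E : Type*} [NormedAddCommGroup E] [InnerProductSpace ℝ E] {n : E}

/-- The homothety of centre `p` and ratio `l`, preceded by the stretching by the factor `1 + s` in
the direction of the unit vector `n` which fixes the hyperplane through `x₀` orthogonal to `n`. -/
noncomputable def stretchedHomothety (n x₀ p : E) (l s : ℝ) (y : E) : E :=
  (1 - l) • p + l • (y - (s * ⟪n, x₀ - y⟫_ℝ) • n)

lemma dist_stretchedHomothety (hn : ‖n‖ = 1) (x₀ p y : E) (l s : ℝ) :
    dist (stretchedHomothety n x₀ p l s y) ((1 - l) • p + l • y) =
      |l * (s * ⟪n, x₀ - y⟫_ℝ)| := by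
  rw [stretchedHomothety, dist_add_left, dist_smul₀, dist_self_sub_left, norm_smul, hn, mul_one,
    ← norm_mul, Real.norm_eq_abs]

lemma addHaar_image_stretchedHomothety [FiniteDimensional ℝ E] [MeasurableSpace E] [BorelSpace E]
    (μ : Measure E) [μ.IsAddHaarMeasure] (hn : ‖n‖ = 1) (x₀ p : E) (l s : ℝ) (V : Set E) :
    μ (stretchedHomothety n x₀ p l s '' V) =
      ENNReal.ofReal |l ^ finrank ℝ E * (1 + s)| * μ V := by
  let L : E →ₗ[ℝ] E := l • LinearMap.transvection (s • innerₛₗ ℝ n) n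
  let w : E := (1 - l) • p - (l * (s * ⟪n, x₀⟫_ℝ)) • n
  have himage : stretchedHomothety n x₀ p l s '' V = (· + w) '' (L '' V) := by
    rw [image_image]
    refine image_congr fun y _ ↦ ?_
    simp only [stretchedHomothety, L, w, inner_sub_right, LinearMap.smul_apply,
      LinearMap.transvection.apply, innerₛₗ_apply_apply, smul_eq_mul]
    module
  have hdet : LinearMap.det L = l ^ finrank ℝ E * (1 + s) := by
    simp [L, LinearMap.det_smul, LinearMap.transvection.det, hn]
  rw [himage, image_add_right, measure_preimage_add_right, Measure.addHaar_image_linearMap, hdet]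

end StretchedHomothety

section Resistance

variable {E : Type*} [NormedAddCommGroup E] [InnerProductSpace ℝ E] [FiniteDimensional ℝ E]
  [MeasurableSpace E] [BorelSpace E]

/-- Newton's resistance of the body over `Ω` with height function `u`; the functional `J` is the
case of the unit disc. -/
noncomputable def resistance (Ω : Set E) (u : E → ℝ) : ℝ :=
  ∫ x in Ω, 1 / (‖gradient u x‖ ^ 2 + 1)

variable {Ω V N : Set E} {u v : E → ℝ} {k G : ℝ} {n : E}

lemma integrableOn_resistance (hΩ : volume Ω ≠ ⊤) (u : E → ℝ) :
    IntegrableOn (fun x ↦ 1 / (‖gradient u x‖ ^ 2 + 1)) Ω := by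
  refine IntegrableOn.of_bound hΩ.lt_top ?_ 1 (.of_forall fun x ↦ ?_)
  · exact (measurable_const.div
      (((measurable_norm_gradient u).pow_const 2).add_const 1)).aestronglyMeasurable
  · rw [Real.norm_of_nonneg (by positivity), div_le_one (by positivity)]
    exact le_add_of_nonneg_left (sq_nonneg _)

lemma resistance_eq_of_norm_gradient_eq (hV : MeasurableSet V)
    (hv : ∀ x ∈ V, ‖gradient v x‖ = k) : resistance V v = volume.real V / (k ^ 2 + 1) := by
  rw [resistance, setIntegral_congr_fun (g := fun _ ↦ 1 / (k ^ 2 + 1)) hV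
    fun x hx ↦ by simp only [hv x hx], setIntegral_const, smul_eq_mul, mul_one_div]

lemma div_le_resistance_of_norm_gradient_le (hV : MeasurableSet V) (hVfin : volume V ≠ ⊤)
    (hNV : N ⊆ V) (hN : ∀ x ∈ N, ‖gradient u x‖ ≤ G) :
    volume.real N / (G ^ 2 + 1) ≤ resistance V u := by
  have hsub : N ⊆ {x | 1 / (G ^ 2 + 1) ≤ 1 / (‖gradient u x‖ ^ 2 + 1)} ∩ V := by
    intro x hx
    have hxG := hN x hx
    have : 1 / (G ^ 2 + 1) ≤ 1 / (‖gradient u x‖ ^ 2 + 1) := by gcongr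
    exact ⟨this, hNV hx⟩
  calc volume.real N / (G ^ 2 + 1)
      = 1 / (G ^ 2 + 1) * volume.real N := by ring
    _ ≤ 1 / (G ^ 2 + 1) * (volume.restrict V).real
          {x | 1 / (G ^ 2 + 1) ≤ 1 / (‖gradient u x‖ ^ 2 + 1)} := by
      rw [measureReal_restrict_apply' hV]
      gcongr
      exact measure_ne_top_of_subset inter_subset_right hVfin
    _ ≤ resistance V u := mul_meas_ge_le_integral_of_nonneg
      (.of_forall fun x ↦ by positivity) (integrableOn_resistance hVfin u) _

lemma resistance_sub_resistance_eq_of_gradient_eq (hΩ : MeasurableSet Ω) (hΩfin : volume Ω ≠ ⊤)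
    (hVΩ : V ⊆ Ω) (hfr : volume (frontier V) = 0)
    (huv : ∀ x ∈ Ω \ closure V, gradient u x = gradient v x) :
    resistance Ω u - resistance Ω v = resistance V u - resistance V v := by
  have hVfin : volume V ≠ ⊤ := measure_ne_top_of_subset hVΩ hΩfin
  simp only [resistance]
  rw [← integral_sub (integrableOn_resistance hΩfin u) (integrableOn_resistance hΩfin v),
    ← integral_sub (integrableOn_resistance hVfin u) (integrableOn_resistance hVfin v)]
  refine setIntegral_eq_of_subset_of_ae_sdiff_eq_zero hΩ.nullMeasurableSet hVΩ ?_
  filter_upwards [measure_eq_zero_iff_ae_notMem.1 hfr] with x hx hxΩ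
  have hxV : x ∉ closure V := fun h ↦ hx ⟨h, fun hint ↦ hxΩ.2 (interior_subset hint)⟩
  rw [huv x ⟨hxΩ.1, hxV⟩, sub_self]

lemma le_resistance_of_concaveOn {x₀ p : E} {a b l s r ρ H : ℝ} (hV : MeasurableSet V)
    (hVfin : volume V ≠ ⊤) (hu : ConcaveOn ℝ V u) (hub : ∀ x ∈ V, u x ∈ Icc 0 b)
    (hpV : ball p ρ ⊆ V) (ha : ∀ x ∈ ball p ρ, a ≤ u x) (hn : ‖n‖ = 1)
    (hH : ∀ y ∈ V, ⟪n, x₀ - y⟫_ℝ ∈ Icc 0 H) (hl₀ : 0 ≤ l) (hl₁ : l < 1) (hs : 0 ≤ s) (hr : 0 < r)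
    (hrρ : l * (s * H) + r ≤ (1 - l) * ρ) (hG : 4 * (b - (1 - l) * a) ≤ G * r) :
    l ^ finrank ℝ E * (1 + s) * volume.real V / (G ^ 2 + 1) ≤ resistance V u := by
  have hball : ∀ y ∈ V, ∀ x ∈ ball (stretchedHomothety n x₀ p l s y) r,
      x ∈ V ∧ (1 - l) * a ≤ u x := by
    intro y hy x hx
    refine mem_and_le_of_concaveOn_of_mem_ball hu hpV ha hy (hub y hy).1 hl₀ hl₁
      (ball_subset_ball' ?_ hx)
    obtain ⟨hy₀, hyH⟩ := hH y hy
    rw [dist_stretchedHomothety hn, abs_of_nonneg (by positivity), add_comm]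
    exact le_trans (by gcongr) hrρ
  have hvol : volume.real (stretchedHomothety n x₀ p l s '' V) =
      l ^ finrank ℝ E * (1 + s) * volume.real V := by
    rw [measureReal_def, addHaar_image_stretchedHomothety volume hn, ENNReal.toReal_mul,
      ENNReal.toReal_ofReal (abs_nonneg _), abs_of_nonneg (by positivity), measureReal_def]
  rw [← hvol]
  refine div_le_resistance_of_norm_gradient_le hV hVfin ?_ ?_
  · rintro _ ⟨y, hy, rfl⟩
    exact (hball y hy _ (mem_ball_self hr)).1
  · rintro _ ⟨y, hy, rfl⟩
    have hyV := fun x hx ↦ (hball y hy x hx).1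
    exact (norm_gradient_le_of_concaveOn_ball hr (hu.subset hyV (convex_ball _ r))
      fun x hx ↦ ⟨(hball y hy x hx).2, (hub x (hyV x hx)).2⟩).trans ((div_le_iff₀ hr).2 hG)

end Resistance

section Cap

variable {E : Type*} [NormedAddCommGroup E] [InnerProductSpace ℝ E]

/-- The affine function vanishing at `x₀` with gradient `-k n`. If `n` is an outer normal of the
domain at `x₀` and `k` is large, it is the steep plane with which the graph of `u` is cut. -/
def supportPlane (n x₀ : E) (k : ℝ) (x : E) : ℝ := k * ⟪n, x₀ - x⟫_ℝ

/-- The part of `Ω` over which the graph of `u` is cut off by the plane `supportPlane n x₀ k`. -/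
def cap (Ω : Set E) (u : E → ℝ) (n x₀ : E) (k : ℝ) : Set E :=
  {x ∈ Ω | supportPlane n x₀ k x < u x}

variable {Ω : Set E} {u : E → ℝ} {n x₀ p : E} {k : ℝ}

lemma cap_subset : cap Ω u n x₀ k ⊆ Ω := sep_subset _ _

lemma continuous_supportPlane (n x₀ : E) (k : ℝ) : Continuous (supportPlane n x₀ k) := by
  unfold supportPlane
  fun_prop

lemma supportPlane_combo {x y : E} {a b : ℝ} (hab : a + b = 1) :
    supportPlane n x₀ k (a • x + b • y) =
      a • supportPlane n x₀ k x + b • supportPlane n x₀ k y := by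
  simp only [supportPlane, inner_sub_right, inner_add_right, real_inner_smul_right, smul_eq_mul]
  linear_combination -k * ⟪n, x₀⟫_ℝ * hab

lemma concaveOn_supportPlane (hΩ : Convex ℝ Ω) (n x₀ : E) (k : ℝ) :
    ConcaveOn ℝ Ω (supportPlane n x₀ k) :=
  ⟨hΩ, fun _ _ _ _ _ _ _ _ hab ↦ (supportPlane_combo hab).ge⟩

lemma convexOn_supportPlane (hΩ : Convex ℝ Ω) (n x₀ : E) (k : ℝ) :
    ConvexOn ℝ Ω (supportPlane n x₀ k) :=
  ⟨hΩ, fun _ _ _ _ _ _ _ _ hab ↦ (supportPlane_combo hab).le⟩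

lemma convex_cap (hu : ConcaveOn ℝ Ω u) (n x₀ : E) (k : ℝ) : Convex ℝ (cap Ω u n x₀ k) := by
  simpa only [cap, Pi.sub_apply, sub_pos] using
    (hu.sub (convexOn_supportPlane hu.1 n x₀ k)).convex_gt 0

lemma isOpen_cap (hΩ : IsOpen Ω) (hu : ContinuousOn u Ω) (n x₀ : E) (k : ℝ) :
    IsOpen (cap Ω u n x₀ k) := by
  have hcap : cap Ω u n x₀ k = Ω ∩ (u - supportPlane n x₀ k) ⁻¹' Ioi 0 := by
    ext x
    simp [cap]
  rw [hcap]
  exact (hu.sub (continuous_supportPlane n x₀ k).continuousOn).isOpen_inter_preimage hΩ isOpen_Ioi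

lemma inner_lt_of_mem_cap {M : ℝ} {x : E} (hk : 0 < k) (hu : u x ≤ M)
    (hx : x ∈ cap Ω u n x₀ k) : ⟪n, x₀ - x⟫_ℝ < M / k := by
  rw [lt_div_iff₀' hk]
  exact hx.2.trans_le hu

lemma mem_cap_and_le_of_mem_ball {c ρ t : ℝ} (hpΩ : ball p ρ ⊆ Ω) (ht : 0 < t)
    (hchord : ∀ y ∈ Ω, (1 - t) • x₀ + t • y ∈ Ω ∧ (1 - t) * c ≤ u ((1 - t) • x₀ + t • y))
    (hk : ∀ y ∈ Ω, k * (t * ⟪n, x₀ - y⟫_ℝ) < (1 - t) * c) {x : E}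
    (hx : x ∈ ball ((1 - t) • x₀ + t • p) (t * ρ)) :
    x ∈ cap Ω u n x₀ k ∧ (1 - t) * c ≤ u x := by
  obtain ⟨q, hq, rfl⟩ := exists_mem_ball_add_smul_eq ht hx
  obtain ⟨hqΩ, hqc⟩ := hchord q (hpΩ hq)
  have hplane : supportPlane n x₀ k ((1 - t) • x₀ + t • q) = k * (t * ⟪n, x₀ - q⟫_ℝ) := by
    rw [supportPlane_combo (by ring)]
    simp only [supportPlane, sub_self, inner_zero_right, mul_zero, smul_eq_mul]
    ring
  exact ⟨⟨hqΩ, hplane.trans_lt ((hk q (hpΩ hq)).trans_le hqc)⟩, hqc⟩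

lemma norm_gradient_supportPlane [CompleteSpace E] (hn : ‖n‖ = 1) (x₀ x : E) (k : ℝ) :
    ‖gradient (supportPlane n x₀ k) x‖ = |k| := by
  have hderiv : HasFDerivAt (supportPlane n x₀ k) (k • -(innerSL ℝ n)) x := by
    unfold supportPlane
    simp only [inner_sub_right]
    exact ((innerSL ℝ n).hasFDerivAt.const_sub ⟪n, x₀⟫_ℝ).const_mul k
  rw [norm_gradient_eq_norm_fderiv, hderiv.fderiv, norm_smul, norm_neg, innerSL_apply_norm, hn,
    mul_one, Real.norm_eq_abs]

lemma resistance_sub_resistance_inf_supportPlane [FiniteDimensional ℝ E] [MeasurableSpace E]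
    [BorelSpace E] (hΩ : IsOpen Ω) (hΩfin : volume Ω ≠ ⊤) (hu : ConcaveOn ℝ Ω u) (hn : ‖n‖ = 1)
    (x₀ : E) (k : ℝ) :
    resistance Ω u - resistance Ω (u ⊓ supportPlane n x₀ k) =
      resistance (cap Ω u n x₀ k) u - volume.real (cap Ω u n x₀ k) / (k ^ 2 + 1) := by
  have hopen : IsOpen (cap Ω u n x₀ k) := isOpen_cap hΩ (hu.continuousOn hΩ) n x₀ k
  have hon : ∀ x ∈ cap Ω u n x₀ k, ‖gradient (u ⊓ supportPlane n x₀ k) x‖ = |k| := by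
    intro x hx
    have : u ⊓ supportPlane n x₀ k =ᶠ[𝓝 x] supportPlane n x₀ k := by
      filter_upwards [hopen.mem_nhds hx] with y hy using inf_eq_right.2 hy.2.le
    rw [this.gradient_eq, norm_gradient_supportPlane hn]
  have hoff : ∀ x ∈ Ω \ closure (cap Ω u n x₀ k),
      gradient u x = gradient (u ⊓ supportPlane n x₀ k) x := by
    rintro x ⟨hxΩ, hx⟩
    refine (Filter.EventuallyEq.gradient_eq ?_).symm
    filter_upwards [hΩ.mem_nhds hxΩ, isClosed_closure.isOpen_compl.mem_nhds hx] with y hyΩ hy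
    exact inf_eq_left.2 (not_lt.1 fun h ↦ hy (subset_closure ⟨hyΩ, h⟩))
  rw [resistance_sub_resistance_eq_of_gradient_eq hΩ.measurableSet hΩfin cap_subset
    ((convex_cap hu n x₀ k).addHaar_frontier volume) hoff,
    resistance_eq_of_norm_gradient_eq hopen.measurableSet hon, sq_abs]

end Cap

section ExposedPoints

variable {E : Type*} [NormedAddCommGroup E] [InnerProductSpace ℝ E]

lemma exists_unit_normal_of_mem_exposedPoints [CompleteSpace E] {K : Set E} {x₀ : E}
    (hK : K.Nontrivial) (hx₀ : x₀ ∈ K.exposedPoints ℝ) :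
    ∃ n : E, ‖n‖ = 1 ∧ ∀ y ∈ K, 0 ≤ ⟪n, x₀ - y⟫_ℝ ∧ (⟪n, x₀ - y⟫_ℝ = 0 → y = x₀) := by
  obtain ⟨-, L, hL⟩ := hx₀
  obtain ⟨y₁, hy₁, hne⟩ := hK.exists_ne x₀
  have hL₀ : L ≠ 0 := by
    rintro rfl
    exact hne ((hL y₁ hy₁).2 le_rfl)
  set m := (InnerProductSpace.toDual ℝ E).symm L with hm
  have hm₀ : 0 < ‖m‖ := by simpa [hm] using hL₀
  have hinner : ∀ y, ⟪‖m‖⁻¹ • m, x₀ - y⟫_ℝ = ‖m‖⁻¹ * (L x₀ - L y) := fun y ↦ by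
    rw [real_inner_smul_left, hm, InnerProductSpace.toDual_symm_apply, map_sub]
  refine ⟨‖m‖⁻¹ • m, norm_smul_inv_norm (norm_pos_iff.1 hm₀), fun y hy ↦ ?_⟩
  rw [hinner, mul_eq_zero, or_iff_right (inv_ne_zero hm₀.ne'), sub_eq_zero]
  exact ⟨mul_nonneg (by positivity) (sub_nonneg.2 (hL y hy).1), fun h ↦ (hL y hy).2 h.le⟩

lemma exists_forall_inner_lt_mem_of_mem_nhds {K U : Set E} {n x₀ : E} (hK : IsCompact K)
    (hn : ∀ y ∈ K, 0 ≤ ⟪n, x₀ - y⟫_ℝ ∧ (⟪n, x₀ - y⟫_ℝ = 0 → y = x₀)) (hU : U ∈ 𝓝 x₀) :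
    ∃ η > 0, ∀ y ∈ K, ⟪n, x₀ - y⟫_ℝ < η → y ∈ U := by
  obtain hempty | hne := (K \ interior U).eq_empty_or_nonempty
  · exact ⟨1, one_pos, fun y hy _ ↦ interior_subset (sdiff_eq_empty.1 hempty hy)⟩
  obtain ⟨z, hz, hmin⟩ := (hK.diff isOpen_interior).exists_isMinOn hne
    (f := fun y ↦ ⟪n, x₀ - y⟫_ℝ) (by fun_prop)
  refine ⟨⟪n, x₀ - z⟫_ℝ, (hn z hz.1).1.lt_of_ne' fun h ↦ hz.2 ?_, fun y hy hlt ↦ ?_⟩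
  · rw [(hn z hz.1).2 h]
    exact mem_interior_iff_mem_nhds.2 hU
  · by_contra hyU
    exact hlt.not_ge (hmin ⟨hy, fun h ↦ hyU (interior_subset h)⟩)

lemma eventually_forall_mem_cap [FiniteDimensional ℝ E] {Ω : Set E} {u : E → ℝ} {n x₀ : E} {M : ℝ}
    {P : E → Prop} (hΩ : Bornology.IsBounded Ω) (hu : ∀ x ∈ Ω, u x ≤ M)
    (hn : ∀ y ∈ closure Ω, 0 ≤ ⟪n, x₀ - y⟫_ℝ ∧ (⟪n, x₀ - y⟫_ℝ = 0 → y = x₀))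
    (hP : ∀ᶠ x in 𝓝[Ω] x₀, P x) : ∀ᶠ k in atTop, ∀ x ∈ cap Ω u n x₀ k, P x := by
  obtain ⟨η, hη, hslab⟩ := exists_forall_inner_lt_mem_of_mem_nhds hΩ.isCompact_closure hn
    (eventually_nhdsWithin_iff.1 hP)
  filter_upwards [eventually_gt_atTop 0, eventually_gt_atTop (M / η)] with k hk hkη x hx
  refine hslab x (subset_closure hx.1) ((inner_lt_of_mem_cap hk (hu x hx.1) hx).trans ?_) hx.1
  rw [div_lt_iff₀ hk]
  rwa [div_lt_iff₀' hη] at hkη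

lemma mem_exposedPoints_closedBall {c x₀ : E} {r : ℝ} (hx₀ : x₀ ∈ sphere c r) :
    x₀ ∈ (closedBall c r).exposedPoints ℝ := by
  have hdist : ∀ y ∈ closedBall c r,
      ‖y - x₀‖ ^ 2 ≤ 2 * (innerSL ℝ (x₀ - c) x₀ - innerSL ℝ (x₀ - c) y) := by
    intro y hy
    have hyr : ‖y - c‖ ^ 2 ≤ ‖x₀ - c‖ ^ 2 := by
      rw [← dist_eq_norm, ← dist_eq_norm, mem_sphere.1 hx₀]
      exact pow_le_pow_left₀ dist_nonneg hy 2
    have hexpand := norm_sub_sq_real (x₀ - c) (x₀ - y)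
    rw [sub_sub_sub_cancel_left, norm_sub_rev x₀ y, inner_sub_right] at hexpand
    simp only [innerSL_apply_apply]
    linarith
  refine ⟨sphere_subset_closedBall hx₀, innerSL ℝ (x₀ - c), fun y hy ↦ ⟨?_, fun hle ↦ ?_⟩⟩
  · linarith [hdist y hy, sq_nonneg ‖y - x₀‖]
  · have hsq : ‖y - x₀‖ ^ 2 ≤ 0 := by linarith [hdist y hy]
    rwa [sq_nonpos_iff, norm_eq_zero, sub_eq_zero] at hsq

end ExposedPoints

section Newton

lemma one_div_lt_sq_mul_div {A l k : ℝ} (hl : 0 < l) (hAlk : 1 ≤ A * l * k) :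
    1 / (k ^ 2 + 1) < l ^ 2 * (1 + 2 * A ^ 2) / ((A * l * k) ^ 2 + 1) := by
  have hsq : 1 ≤ (A * l * k) ^ 2 := one_le_pow₀ hAlk
  rw [div_lt_div_iff₀ (by positivity) (by positivity), one_mul]
  calc (A * l * k) ^ 2 + 1 ≤ 2 * (A * l * k) ^ 2 := by linarith
    _ < 2 * (A * l * k) ^ 2 + l ^ 2 * (k ^ 2 + 1 + 2 * A ^ 2) :=
      lt_add_of_pos_right _ (by positivity)
    _ = l ^ 2 * (1 + 2 * A ^ 2) * (k ^ 2 + 1) := by ring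

variable {E : Type*} [NormedAddCommGroup E] [InnerProductSpace ℝ E] [FiniteDimensional ℝ E]
  [MeasurableSpace E] [BorelSpace E] {Ω : Set E} {u : E → ℝ} {x₀ n p : E} {M : ℝ}

lemma resistance_inf_supportPlane_lt {A D c k l t ρ : ℝ} (hE : finrank ℝ E = 2) (hΩ : IsOpen Ω)
    (hΩfin : volume Ω ≠ ⊤) (hu : ConcaveOn ℝ Ω u) (huM : ∀ x ∈ Ω, u x ∈ Icc 0 M) (hn : ‖n‖ = 1)
    (hD₀ : 0 < D) (hD : ∀ x ∈ Ω, ⟪n, x₀ - x⟫_ℝ ∈ Icc 0 D) (hρ : 0 < ρ) (hpΩ : ball p ρ ⊆ Ω)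
    (hc : 0 < c) (ht₀ : 0 < t)
    (hchord : ∀ y ∈ Ω, (1 - t) • x₀ + t • y ∈ Ω ∧ (1 - t) * c ≤ u ((1 - t) • x₀ + t • y))
    (hl₀ : 0 < l) (hl₁ : l ≤ 1 / 2) (hA : A * ρ = 64 * D)
    (hAl : 16 * A ^ 2 * M * D * l ≤ c * ρ) (hk : 0 < k) (ht : 2 * D * k * t = c)
    (htl : t ≤ l / 2) (hAlk : 1 ≤ A * l * k)
    (hcap : ∀ x ∈ cap Ω u n x₀ k, u x ≤ (1 + l / 2) * c) :
    resistance Ω (u ⊓ supportPlane n x₀ k) < resistance Ω u := by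
  set V := cap Ω u n x₀ k
  have hopen : IsOpen V := isOpen_cap hΩ (hu.continuousOn hΩ) n x₀ k
  have hVfin : volume V ≠ ⊤ := measure_ne_top_of_subset cap_subset hΩfin
  have hball : ∀ x ∈ ball ((1 - t) • x₀ + t • p) (t * ρ), x ∈ V ∧ (1 - t) * c ≤ u x := by
    refine fun x ↦ mem_cap_and_le_of_mem_ball hpΩ ht₀ hchord fun y hy ↦ ?_
    calc k * (t * ⟪n, x₀ - y⟫_ℝ) ≤ k * (t * D) := by gcongr; exact (hD y hy).2
      _ = c / 2 := by linear_combination ht / 2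
      _ < (1 - t) * c := by nlinarith
  have hVpos : 0 < volume.real V :=
    ENNReal.toReal_pos (hopen.measure_pos volume
      ⟨_, (hball _ (mem_ball_self (by positivity))).1⟩).ne' hVfin
  have hreach : l * (2 * A ^ 2 * (M / k)) ≤ t * ρ / 4 := by
    have hscale : (t * ρ / 4) * (8 * D * k) = c * ρ := by linear_combination ρ * ht
    refine le_of_mul_le_mul_right ?_ (by positivity : 0 < 8 * D * k)
    calc l * (2 * A ^ 2 * (M / k)) * (8 * D * k) = 16 * A ^ 2 * M * D * l := by field
      _ ≤ t * ρ / 4 * (8 * D * k) := hAl.trans_eq hscale.symm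
  have hslope : 4 * ((1 + l / 2) * c - (1 - l) * ((1 - t) * c)) ≤ A * l * k * (t * ρ / 4) :=
    calc 4 * ((1 + l / 2) * c - (1 - l) * ((1 - t) * c)) ≤ 8 * l * c := by
          nlinarith [mul_pos hl₀ ht₀]
      _ = A * l * k * (t * ρ / 4) := by
          linear_combination -8 * l * ht - l * k * t / 4 * hA
  have hroom : t * ρ / 4 + t * ρ / 4 ≤ (1 - l) * (t * ρ) := by nlinarith [mul_pos ht₀ hρ]
  have hflat := le_resistance_of_concaveOn hopen.measurableSet hVfin
    (hu.subset cap_subset (convex_cap hu n x₀ k))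
    (fun x hx ↦ ⟨(huM x (cap_subset hx)).1, hcap x hx⟩)
    (fun x hx ↦ (hball x hx).1) (fun x hx ↦ (hball x hx).2) hn
    (fun y hy ↦ ⟨(hD y (cap_subset hy)).1,
      (inner_lt_of_mem_cap hk (huM y (cap_subset hy)).2 hy).le⟩)
    hl₀.le (by linarith) (by positivity : 0 ≤ 2 * A ^ 2) (by positivity) (by linarith) hslope
  rw [← sub_pos, resistance_sub_resistance_inf_supportPlane hΩ hΩfin hu hn, sub_pos]
  refine lt_of_lt_of_le ?_ hflat
  have hlt := mul_lt_mul_of_pos_left (one_div_lt_sq_mul_div hl₀ hAlk) hVpos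
  rw [hE]
  convert! hlt using 1 <;> ring

lemma eventually_resistance_inf_supportPlane_lt (hE : finrank ℝ E = 2) (hΩ : IsOpen Ω)
    (hΩb : Bornology.IsBounded Ω) (hu : ConcaveOn ℝ Ω u) (huM : ∀ x ∈ Ω, u x ∈ Icc 0 M)
    (hx₀ : x₀ ∈ closure Ω) (hn : ‖n‖ = 1)
    (hexp : ∀ y ∈ closure Ω, 0 ≤ ⟪n, x₀ - y⟫_ℝ ∧ (⟪n, x₀ - y⟫_ℝ = 0 → y = x₀))
    (hlimsup : 0 < limsup u (𝓝[Ω] x₀)) :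
    ∀ᶠ k in atTop, resistance Ω (u ⊓ supportPlane n x₀ k) < resistance Ω u := by
  set c := limsup u (𝓝[Ω] x₀)
  have hbdd : (𝓝[Ω] x₀).IsBoundedUnder (· ≤ ·) u :=
    isBoundedUnder_of_eventually_le (eventually_mem_nhdsWithin.mono fun x hx ↦ (huM x hx).2)
  obtain ⟨p, hp⟩ := closure_nonempty_iff.1 ⟨x₀, hx₀⟩
  obtain ⟨ρ, hρ, hpΩ⟩ := isOpen_iff.1 hΩ p hp
  obtain ⟨D, hD₀, hD⟩ : ∃ D > 0, ∀ x ∈ Ω, ⟪n, x₀ - x⟫_ℝ ∈ Icc 0 D := by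
    obtain ⟨D, hD₀, hD⟩ := hΩb.subset_ball_lt 0 x₀
    refine ⟨D, hD₀, fun x hx ↦ ⟨(hexp x (subset_closure hx)).1, ?_⟩⟩
    calc ⟪n, x₀ - x⟫_ℝ ≤ ‖n‖ * ‖x₀ - x‖ := real_inner_le_norm _ _
      _ ≤ D := by rw [hn, one_mul, ← dist_eq_norm']; exact (hD hx).le
  obtain ⟨A, hA₀, hA⟩ : ∃ A > 0, A * ρ = 64 * D :=
    ⟨64 * D / ρ, by positivity, div_mul_cancel₀ _ hρ.ne'⟩
  obtain ⟨l, ⟨hl₁, hAl⟩, hl₀⟩ :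
      ∃ l : ℝ, (l < 1 / 2 ∧ 16 * A ^ 2 * M * D * l < c * ρ) ∧ 0 < l := by
    have hsmall : ∀ᶠ l : ℝ in 𝓝 0, l < 1 / 2 ∧ 16 * A ^ 2 * M * D * l < c * ρ :=
      (eventually_lt_nhds (by norm_num)).and
        ((Continuous.tendsto' (by fun_prop) 0 0 (by simp)).eventually_lt_const (by positivity))
    exact ((hsmall.filter_mono nhdsWithin_le_nhds).and (self_mem_nhdsWithin (s := Ioi 0))).exists
  filter_upwards [eventually_gt_atTop 0, eventually_ge_atTop (c / (D * l)),
    eventually_ge_atTop (1 / (A * l)),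
    eventually_forall_mem_cap hΩb (fun x hx ↦ (huM x hx).2) hexp
      (eventually_lt_of_limsup_lt (show c < (1 + l / 2) * c by nlinarith) hbdd)]
    with k hk hkc hkA hcap
  rw [div_le_iff₀' (by positivity)] at hkc
  rw [div_le_iff₀' (by positivity)] at hkA
  have ht : 2 * D * k * (c / (2 * D * k)) = c := by field
  have htl : c / (2 * D * k) ≤ l / 2 := by
    rw [div_le_iff₀ (by positivity)]
    linarith
  have ht₀ : 0 < c / (2 * D * k) := by positivity
  refine resistance_inf_supportPlane_lt hE hΩ hΩb.measure_lt_top.ne hu huM hn hD₀ hD hρ hpΩ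
    hlimsup ht₀ (fun y hy ↦ ?_) hl₀ hl₁.le hA hAl.le hk ht htl hkA fun x hx ↦ (hcap x hx).le
  have ht₁ : c / (2 * D * k) ≤ 1 := by linarith
  exact ⟨combo_mem_of_mem_closure hΩ hu.1 hx₀ hy ht₀ ht₁,
    mul_limsup_le_of_concaveOn hΩ hu (fun x hx ↦ (huM x hx).1) hx₀ hy ht₀ ht₁⟩

theorem minimizer_vanishes_at_boundary_general (hE : finrank ℝ E = 2) (hΩ : IsOpen Ω)
    (hΩb : Bornology.IsBounded Ω) (hu : ConcaveOn ℝ Ω u) (huM : ∀ x ∈ Ω, u x ∈ Icc 0 M)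
    (hmin : ∀ v : E → ℝ, ConcaveOn ℝ Ω v → (∀ x ∈ Ω, v x ∈ Icc 0 M) →
      resistance Ω u ≤ resistance Ω v)
    (hx₀ : x₀ ∈ (closure Ω).exposedPoints ℝ) : Tendsto u (𝓝[Ω] x₀) (𝓝 0) := by
  have : (𝓝[Ω] x₀).NeBot := mem_closure_iff_nhdsWithin_neBot.1 hx₀.1
  refine tendsto_zero_of_limsup_nonpos (eventually_mem_nhdsWithin.mono huM) ?_
  by_contra! hlimsup
  have hnontrivial : (closure Ω).Nontrivial := by
    have : Nontrivial E := nontrivial_of_finrank_pos (R := ℝ) (by omega)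
    obtain ⟨p, hp⟩ := closure_nonempty_iff.1 ⟨x₀, hx₀.1⟩
    have := punctured_nhds_neBot ℝ E p
    exact (infinite_of_mem_nhds p (hΩ.mem_nhds hp)).nontrivial.mono subset_closure
  obtain ⟨n, hn, hexp⟩ := exists_unit_normal_of_mem_exposedPoints hnontrivial hx₀
  obtain ⟨k, hlt, hk⟩ := ((eventually_resistance_inf_supportPlane_lt hE hΩ hΩb hu huM hx₀.1 hn
    hexp hlimsup).and (eventually_ge_atTop 0)).exists
  refine (hmin _ (hu.inf (concaveOn_supportPlane hu.1 n x₀ k)) fun x hx ↦ ?_).not_gt hlt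
  exact ⟨le_inf (huM x hx).1 (mul_nonneg hk (hexp x (subset_closure hx)).1),
    inf_le_left.trans (huM x hx).2⟩

end Newton

/-- A minimizer of Newton's problem vanishes at the boundary: for every
boundary point `x₀` with `|x₀| = 1`, `u(x) → 0` as `x → x₀` within `Ω`. -/
theorem minimizer_vanishes_at_boundary (M : ℝ) (hM : 0 < M)
    (u : EuclideanSpace ℝ (Fin 2) → ℝ)
    (hu : ConcaveOn ℝ Omega u) (huM : ∀ x ∈ Omega, u x ∈ Icc 0 M)
    (hmin : ∀ v : EuclideanSpace ℝ (Fin 2) → ℝ,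
      ConcaveOn ℝ Omega v → (∀ x ∈ Omega, v x ∈ Icc 0 M) → J u ≤ J v) :
    ∀ x₀ : EuclideanSpace ℝ (Fin 2), ‖x₀‖ = 1 →
      Filter.Tendsto u (nhdsWithin x₀ Omega) (nhds 0) := by
  intro x₀ hx₀
  refine minimizer_vanishes_at_boundary_general finrank_euclideanSpace_fin isOpen_ball
    isBounded_ball hu huM hmin ?_
  rw [Omega, closure_ball _ one_ne_zero]
  exact mem_exposedPoints_closedBall (mem_sphere_zero_iff_norm.2 hx₀)
end

section
/- On any open set where a minimizer of Newton's problem is twice continuously differentiable, its Hessian is everywhere degenerate: if u : Ω → [0, M] is concave and minimizes J over all concave functions v : Ω → [0, M], and u is C² on an open subset ω ⊆ Ω, then for every x ∈ ω the Hessian matrix ∇²u(x) is singular, i.e., det ∇²u(x) = 0 (equivalently, there exists a nonzero vector v ∈ ℝ² with ∇²u(x) v = 0). -/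
open Set MeasureTheory

open Filter AffineMap
open scoped Topology

/-!
At a point where its Hessian is nondegenerate, a concave `C²` function `u` has a negative definite
Hessian, so `u` is strongly concave on a ball, and at some point of it lies strictly between the two
obstacles. For `φ ∈ C²` supported near that point, `u ± tφ` is then still admissible for small `t`.
Write `f` for the integrand as a function of the slope `Du`. Adding the energies of `u + tφ` and
`u - tφ` cancels the first variation and leaves `2 J(u) + t² ∫ D²f(Du)(Dφ, Dφ)` up to an error
`o(t²)`. At every slope `f` has a direction `ℓ` of strict concavity (for Newton's integrand, any
direction orthogonal to the slope), so a bump function oscillating fast along `ℓ` makes the second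
variation negative: one of `u ± tφ` beats `u`.
-/

section SecondDerivative

variable {E : Type*} [NormedAddCommGroup E] [NormedSpace ℝ E] {f : E → ℝ} {x y : E}

lemma hasDerivAt_comp_lineMap {τ : ℝ} (hf : DifferentiableAt ℝ f (lineMap x y τ)) :
    HasDerivAt (fun τ ↦ f (lineMap x y τ)) (fderiv ℝ f (lineMap x y τ) (y - x)) τ :=
  hf.hasFDerivAt.comp_hasDerivAt τ hasDerivAt_lineMap

lemma hasDerivAt_fderiv_comp_lineMap {τ : ℝ} (hf : ContDiffAt ℝ 2 f (lineMap x y τ)) :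
    HasDerivAt (fun τ ↦ fderiv ℝ f (lineMap x y τ) (y - x))
      (fderiv ℝ (fderiv ℝ f) (lineMap x y τ) (y - x) (y - x)) τ := by
  have hfd : DifferentiableAt ℝ (fderiv ℝ f) (lineMap x y τ) :=
    (hf.fderiv_right (m := 1) (by norm_num)).differentiableAt one_ne_zero
  have h : HasDerivAt (fun τ ↦ fderiv ℝ f (lineMap x y τ))
      (fderiv ℝ (fderiv ℝ f) (lineMap x y τ) (y - x)) τ :=
    hfd.hasFDerivAt.comp_hasDerivAt τ hasDerivAt_lineMap
  simpa using h.clm_apply (hasDerivAt_const τ (y - x))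

lemma fderiv_fderiv_eq_of_hasDerivAt {d : E} {g : ℝ → ℝ} {c : ℝ} (hf : ContDiff ℝ 2 f)
    (hg : ∀ τ, HasDerivAt (fun τ : ℝ ↦ f (x + τ • d)) (g τ) τ) (hc : HasDerivAt g c 0) :
    fderiv ℝ (fderiv ℝ f) x d d = c := by
  have hline : ∀ τ : ℝ, lineMap x (x + d) τ = x + τ • d := fun τ ↦ by
    rw [lineMap_apply_module', add_sub_cancel_left, add_comm]
  have hDf : (fun τ ↦ fderiv ℝ f (lineMap x (x + d) τ) (x + d - x)) = g := funext fun τ ↦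
    (hasDerivAt_comp_lineMap (hf.differentiable two_ne_zero _)).unique
      (by simpa only [hline] using hg τ)
  have hD2f := hasDerivAt_fderiv_comp_lineMap (x := x) (y := x + d) (τ := 0) hf.contDiffAt
  rw [hDf, lineMap_apply_zero, add_sub_cancel_left] at hD2f
  exact hD2f.unique hc

lemma continuousAt_fderiv_fderiv (hf : ContDiffAt ℝ 2 f x) :
    ContinuousAt (fderiv ℝ (fderiv ℝ f)) x :=
  ((hf.fderiv_right (m := 1) (by norm_num)).fderiv_right (m := 0) (by norm_num)).continuousAt

lemma eventually_fderiv_fderiv_le_add_norm_sq (hf : ContDiffAt ℝ 2 f x) {ε : ℝ} (hε : 0 < ε) :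
    ∀ᶠ z in 𝓝 x, ∀ d,
      fderiv ℝ (fderiv ℝ f) z d d ≤ fderiv ℝ (fderiv ℝ f) x d d + ε * ‖d‖ ^ 2 := by
  have hcont := tendsto_iff_norm_sub_tendsto_zero (E := E →L[ℝ] E →L[ℝ] ℝ).1
    (continuousAt_fderiv_fderiv hf)
  filter_upwards [hcont.eventually_lt_const hε] with z hz d
  rw [← sub_le_iff_le_add']
  calc (fderiv ℝ (fderiv ℝ f) z - fderiv ℝ (fderiv ℝ f) x) d d
      ≤ ‖fderiv ℝ (fderiv ℝ f) z - fderiv ℝ (fderiv ℝ f) x‖ * ‖d‖ * ‖d‖ :=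
        (Real.le_norm_self _).trans (ContinuousLinearMap.le_opNorm₂ _ d d)
    _ ≤ ε * ‖d‖ ^ 2 := by rw [mul_assoc, ← sq]; gcongr

lemma concaveOn_comp_lineMap_sub_sq {C : ℝ} (hf : ∀ z ∈ segment ℝ x y, ContDiffAt ℝ 2 f z)
    (hC : ∀ z ∈ segment ℝ x y, fderiv ℝ (fderiv ℝ f) z (y - x) (y - x) ≤ C) :
    ConcaveOn ℝ (Icc 0 1) fun τ ↦ f (lineMap x y τ) - C / 2 * τ ^ 2 := by
  have hmem : ∀ τ ∈ Icc (0 : ℝ) 1, lineMap x y τ ∈ segment ℝ x y := fun τ hτ ↦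
    segment_eq_image_lineMap ℝ x y ▸ mem_image_of_mem _ hτ
  have hderiv : ∀ τ ∈ Icc (0 : ℝ) 1, HasDerivAt (fun τ ↦ f (lineMap x y τ) - C / 2 * τ ^ 2)
      (fderiv ℝ f (lineMap x y τ) (y - x) - C * τ) τ := fun τ hτ ↦ by
    have hsq : HasDerivAt (fun τ : ℝ ↦ C / 2 * τ ^ 2) (C * τ) τ :=
      ((hasDerivAt_pow 2 τ).const_mul _).congr_deriv (by push_cast; ring)
    exact (hasDerivAt_comp_lineMap ((hf _ (hmem τ hτ)).differentiableAt two_ne_zero)).sub hsq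
  have hderiv₂ : ∀ τ ∈ Icc (0 : ℝ) 1,
      HasDerivAt (fun τ ↦ fderiv ℝ f (lineMap x y τ) (y - x) - C * τ)
        (fderiv ℝ (fderiv ℝ f) (lineMap x y τ) (y - x) (y - x) - C) τ := fun τ hτ ↦
    (hasDerivAt_fderiv_comp_lineMap (hf _ (hmem τ hτ))).sub (hasDerivAt_const_mul C)
  exact concaveOn_of_hasDerivWithinAt2_nonpos (convex_Icc 0 1)
    (fun τ hτ ↦ (hderiv τ hτ).continuousAt.continuousWithinAt)
    (fun τ hτ ↦ (hderiv τ (interior_subset hτ)).hasDerivWithinAt)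
    (fun τ hτ ↦ (hderiv₂ τ (interior_subset hτ)).hasDerivWithinAt)
    (fun τ hτ ↦ sub_nonpos.2 (hC _ (hmem τ (interior_subset hτ))))

lemma add_sub_le_of_fderiv_fderiv_le {d : E} {C : ℝ}
    (hf : ∀ z ∈ segment ℝ (x - d) (x + d), ContDiffAt ℝ 2 f z)
    (hC : ∀ z ∈ segment ℝ (x - d) (x + d), fderiv ℝ (fderiv ℝ f) z d d ≤ C) :
    f (x + d) + f (x - d) ≤ 2 * f x + C := by
  have h2d : x + d - (x - d) = (2 : ℝ) • d := by module
  have hconc := concaveOn_comp_lineMap_sub_sq (C := 4 * C) hf fun z hz ↦ by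
    simp only [h2d, map_smul, smul_apply, smul_eq_mul]
    linarith [hC z hz]
  have hmid := hconc.2 (left_mem_Icc.2 zero_le_one) (right_mem_Icc.2 zero_le_one)
    one_half_pos.le one_half_pos.le (add_halves 1)
  have hx : lineMap (x - d) (x + d) (1 / 2 : ℝ) = x := by
    rw [lineMap_apply_module]; module
  norm_num at hmid hx
  rw [hx] at hmid
  linarith

lemma strongConcaveOn_of_fderiv_fderiv_le {s : Set E} {m : ℝ} (hs : Convex ℝ s)
    (hf : ∀ z ∈ s, ContDiffAt ℝ 2 f z)
    (hm : ∀ z ∈ s, ∀ d, fderiv ℝ (fderiv ℝ f) z d d ≤ -m * ‖d‖ ^ 2) : StrongConcaveOn s m f := by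
  refine ⟨hs, fun x hx y hy a b ha hb hab ↦ ?_⟩
  have hxy := hs.segment_subset hx hy
  have hconc := concaveOn_comp_lineMap_sub_sq (fun z hz ↦ hf z (hxy hz))
    fun z hz ↦ hm z (hxy hz) (y - x)
  have h := hconc.2 (left_mem_Icc.2 zero_le_one) (right_mem_Icc.2 zero_le_one) ha hb hab
  obtain rfl : a = 1 - b := eq_sub_of_add_eq hab
  simp only [smul_eq_mul, mul_zero, mul_one, zero_add, lineMap_apply_zero, lineMap_apply_one] at h
  simp only [lineMap_apply_module] at h
  simp only [smul_eq_mul, norm_sub_rev x y]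
  linarith

lemma fderiv_fderiv_nonpos_of_concaveOn {s : Set E} (hfs : ConcaveOn ℝ s f) (hs : s ∈ 𝓝 x)
    (hf : ContDiffAt ℝ 2 f x) (d : E) : fderiv ℝ (fderiv ℝ f) x d d ≤ 0 := by
  obtain ⟨r, hr, hball⟩ := Metric.eventually_nhds_iff_ball.1
    ((hf.eventually (by simp)).and hs)
  set ℓ : ℝ →ᵃ[ℝ] E := lineMap x (x + d)
  have hℓ₀ : ℓ 0 = x := lineMap_apply_zero x (x + d)
  set T : Set ℝ := ℓ ⁻¹' Metric.ball x r
  have hT : T ∈ 𝓝 0 := (lineMap_continuous.continuousAt (x := (0 : ℝ))).preimage_mem_nhds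
    (by rw [hℓ₀]; exact Metric.ball_mem_nhds x hr)
  have hderiv : ∀ τ ∈ T, HasDerivAt (f ∘ ℓ) (fderiv ℝ f (ℓ τ) (x + d - x)) τ := fun τ hτ ↦
    hasDerivAt_comp_lineMap ((hball _ hτ).1.differentiableAt two_ne_zero)
  have hanti : AntitoneOn (deriv (f ∘ ℓ)) T :=
    ((hfs.subset (fun z hz ↦ (hball z hz).2) (convex_ball x r)).comp_affineMap ℓ).antitoneOn_deriv
      fun τ hτ ↦ (hderiv τ hτ).differentiableAt
  have hderiv₂ : HasDerivAt (deriv (f ∘ ℓ))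
      (fderiv ℝ (fderiv ℝ f) (ℓ 0) (x + d - x) (x + d - x)) 0 :=
    (hasDerivAt_fderiv_comp_lineMap (by rwa [lineMap_apply_zero])).congr_of_eventuallyEq
      (by filter_upwards [hT] with τ hτ using (hderiv τ hτ).deriv)
  have h := hanti.derivWithin_nonpos (x := 0)
  rwa [derivWithin_of_mem_nhds hT, hderiv₂.deriv, hℓ₀, add_sub_cancel_left] at h

end SecondDerivative

section LocalConcavity

lemma nonneg_of_forall_exists_mem_nhds_concaveOn {g : ℝ → ℝ}
    (hg : ∀ t ∈ Icc (0 : ℝ) 1, ∃ U ∈ 𝓝 t, ConcaveOn ℝ U g) (h₀ : 0 ≤ g 0) (h₁ : 0 ≤ g 1)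
    {t : ℝ} (ht : t ∈ Icc (0 : ℝ) 1) : 0 ≤ g t := by
  have hcont : ContinuousOn g (Icc 0 1) := fun t ht ↦ by
    obtain ⟨U, hU, hconc⟩ := hg t ht
    exact (hconc.continuousOn_interior.continuousAt
      (interior_mem_nhds.2 hU)).continuousWithinAt
  obtain ⟨t₀, ht₀, hmin⟩ := isCompact_Icc.exists_isMinOn (nonempty_Icc.2 zero_le_one) hcont
  refine le_trans (le_of_not_gt fun hneg ↦ ?_) (hmin ht)
  -- The minimum set is closed, and open to the right by midpoint concavity, so it reaches `1`.
  have hclosed : IsClosed (g ⁻¹' {g t₀} ∩ Icc t₀ 1) := by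
    rw [inter_comm]
    exact (hcont.mono (Icc_subset_Icc_left ht₀.1)).preimage_isClosed_of_isClosed isClosed_Icc
      isClosed_singleton
  have hopen : ∀ s ∈ g ⁻¹' {g t₀} ∩ Ico t₀ 1, g ⁻¹' {g t₀} ∈ 𝓝[>] s := by
    rintro s ⟨hs, hts, hs1⟩
    have hs : g s = g t₀ := hs
    have hs0 : 0 < s := (ht₀.1.trans hts).lt_of_ne (by rintro rfl; linarith)
    obtain ⟨U, hU, hconc⟩ := hg s ⟨hs0.le, hs1.le⟩
    have hrefl : Tendsto (fun z ↦ 2 * s - z) (𝓝 s) (𝓝 s) :=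
      (Continuous.tendsto (by fun_prop) s).mono_right (by ring_nf; rfl)
    have hV : U ∩ Icc 0 1 ∈ 𝓝 s := inter_mem hU (Icc_mem_nhds hs0 hs1)
    filter_upwards [nhdsWithin_le_nhds hV, nhdsWithin_le_nhds (hrefl hV)] with z hz hz'
    have hmid := hconc.2 hz.1 hz'.1 one_half_pos.le one_half_pos.le (add_halves 1)
    rw [show (1 / 2 : ℝ) • z + (1 / 2 : ℝ) • (2 * s - z) = s by simp only [smul_eq_mul]; ring,
      smul_eq_mul, smul_eq_mul] at hmid
    have hgz : g t₀ ≤ g z := hmin hz.2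
    have hgz' : g t₀ ≤ g (2 * s - z) := hmin hz'.2
    exact le_antisymm (by linarith) hgz
  have : g 1 = g t₀ :=
    hclosed.Icc_subset_of_forall_mem_nhdsWithin rfl hopen (right_mem_Icc.2 ht₀.2)
  linarith

lemma concaveOn_of_forall_exists_mem_nhds {E : Type*} [AddCommGroup E] [TopologicalSpace E]
    [IsTopologicalAddGroup E] [Module ℝ E] [ContinuousSMul ℝ E] {s : Set E} {f : E → ℝ}
    (hs : Convex ℝ s) (hf : ∀ x ∈ s, ∃ U ∈ 𝓝 x, ConcaveOn ℝ U f) : ConcaveOn ℝ s f := by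
  refine ⟨hs, fun x hx y hy a b ha hb hab ↦ ?_⟩
  have hloc : ∀ τ ∈ Icc (0 : ℝ) 1, ∃ U ∈ 𝓝 τ,
      ConcaveOn ℝ U fun τ ↦ f (lineMap x y τ) - lineMap (f x) (f y) τ := fun τ hτ ↦ by
    obtain ⟨U, hU, hconc⟩ := hf _ (hs.lineMap_mem hx hy hτ)
    have hpre := hconc.comp_affineMap (lineMap x y)
    exact ⟨lineMap x y ⁻¹' U, lineMap_continuous.continuousAt.preimage_mem_nhds hU,
      hpre.sub ⟨hpre.1, fun _ _ _ _ _ _ _ _ hab ↦ (Convex.combo_affine_apply hab).le⟩⟩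
  have h := nonneg_of_forall_exists_mem_nhds_concaveOn hloc (by simp) (by simp)
    (show b ∈ Icc (0 : ℝ) 1 from ⟨hb, by linarith⟩)
  obtain rfl : a = 1 - b := eq_sub_of_add_eq hab
  simpa [lineMap_apply_module] using h

end LocalConcavity

section StrongConcavity

variable {E : Type*} [NormedAddCommGroup E] [NormedSpace ℝ E]

lemma isCoercive_of_forall_pos [FiniteDimensional ℝ E] {B : E →L[ℝ] E →L[ℝ] ℝ}
    (hB : ∀ v, v ≠ 0 → 0 < B v v) : IsCoercive B := by
  rcases subsingleton_or_nontrivial E with _ | _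
  · exact ⟨1, one_pos, fun v ↦ by simp [Subsingleton.elim v 0]⟩
  obtain ⟨v₀, hv₀, hmin⟩ := (isCompact_sphere (0 : E) 1).exists_isMinOn
    (NormedSpace.sphere_nonempty.2 zero_le_one) (f := fun v ↦ B v v) (by fun_prop)
  refine ⟨B v₀ v₀, hB v₀ (ne_zero_of_mem_unit_sphere ⟨v₀, hv₀⟩), fun v ↦ ?_⟩
  rcases eq_or_ne v 0 with rfl | hv
  · simp
  have hsphere : ‖v‖⁻¹ • v ∈ Metric.sphere (0 : E) 1 := by
    simpa using norm_smul_inv_norm (𝕜 := ℝ) hv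
  calc B v₀ v₀ * ‖v‖ * ‖v‖ ≤ B (‖v‖⁻¹ • v) (‖v‖⁻¹ • v) * ‖v‖ * ‖v‖ := by
        gcongr; exact hmin hsphere
    _ = B v v := by
        have : ‖v‖ ≠ 0 := norm_ne_zero_iff.2 hv
        simp only [map_smul, smul_apply, smul_eq_mul]
        field_simp

lemma isCoercive_of_nondegenerate [FiniteDimensional ℝ E] {B : E →L[ℝ] E →L[ℝ] ℝ}
    (hsymm : ∀ v w, B v w = B w v) (hnonneg : ∀ v, 0 ≤ B v v)
    (hB : ∀ v, v ≠ 0 → ∃ w, B v w ≠ 0) : IsCoercive B := by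
  have hker : ∀ v, B v v = 0 ↔ v ∈ LinearMap.ker B.toLinearMap₁₂ := fun v ↦
    LinearMap.BilinForm.apply_apply_same_eq_zero_iff B.toLinearMap₁₂ hnonneg ⟨hsymm⟩
  refine isCoercive_of_forall_pos fun v hv ↦ (hnonneg v).lt_of_ne' fun h₀ ↦ ?_
  obtain ⟨w, hw⟩ := hB v hv
  exact hw (LinearMap.congr_fun (LinearMap.mem_ker.1 ((hker v).1 h₀)) w)

lemma exists_ball_strongConcaveOn [FiniteDimensional ℝ E] {s U : Set E} {u : E → ℝ} {x : E}
    (hu : ConcaveOn ℝ s u) (hs : s ∈ 𝓝 x) (hux : ContDiffAt ℝ 2 u x)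
    (hnd : ∀ v, v ≠ 0 → ∃ w, fderiv ℝ (fderiv ℝ u) x v w ≠ 0) (hU : U ∈ 𝓝 x) :
    ∃ r > 0, Metric.ball x r ⊆ U ∧ ∃ m > 0, StrongConcaveOn (Metric.ball x r) m u := by
  have hcoer : IsCoercive (-fderiv ℝ (fderiv ℝ u) x) := isCoercive_of_nondegenerate
    (fun v w ↦ congrArg Neg.neg ((hux.isSymmSndFDerivAt (by simp)).eq v w))
    (fun v ↦ neg_nonneg.2 (fderiv_fderiv_nonpos_of_concaveOn hu hs hux v))
    (fun v hv ↦ (hnd v hv).imp fun w hw ↦ neg_ne_zero.2 hw)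
  obtain ⟨m, hm, hcoer⟩ := hcoer
  have hnear := (eventually_fderiv_fderiv_le_add_norm_sq hux (half_pos hm)).and
    ((hux.eventually (by simp)).and hU)
  obtain ⟨r, hr, hball⟩ := Metric.eventually_nhds_iff_ball.1 hnear
  refine ⟨r, hr, fun z hz ↦ (hball z hz).2.2, m / 2, half_pos hm,
    strongConcaveOn_of_fderiv_fderiv_le (convex_ball x r) (fun z hz ↦ (hball z hz).2.1)
      fun z hz d ↦ ?_⟩
  have hd : m * ‖d‖ * ‖d‖ ≤ -fderiv ℝ (fderiv ℝ u) x d d := hcoer d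
  linarith [(hball z hz).1 d]

lemma exists_mem_Ioo_of_strictConcaveOn {s : Set E} {f : E → ℝ} {a b : ℝ}
    (hf : StrictConcaveOn ℝ s f) (hs : s.Nontrivial) (hfs : MapsTo f s (Icc a b)) :
    ∃ x ∈ s, f x ∈ Ioo a b := by
  have hmid : ∀ x ∈ s, ∀ y ∈ s, x ≠ y → midpoint ℝ x y ∈ s ∧ a < f (midpoint ℝ x y) :=
    fun x hx y hy hxy ↦ ⟨hf.1.midpoint_mem hx hy, (le_min (hfs hx).1 (hfs hy).1).trans_lt
      (hf.lt_on_openSegment hx hy hxy (midpoint_mem_openSegment x y))⟩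
  obtain ⟨x, hx, y, hy, hxy⟩ := hs
  obtain ⟨hz, haz⟩ := hmid x hx y hy hxy
  obtain ⟨hw, haw⟩ := hmid x hx _ hz (mt (left_eq_midpoint_iff ℝ).1 hxy)
  by_contra! hb
  have hfb : ∀ p ∈ s, a < f p → IsMaxOn f s p := fun p hp hap q hq ↦
    (hfs hq).2.trans (not_lt.1 fun hpb ↦ hb p hp ⟨hap, hpb⟩)
  exact mt (midpoint_eq_right_iff ℝ).1 (mt (left_eq_midpoint_iff ℝ).1 hxy)
    (hf.eq_of_isMaxOn (hfb _ hw haw) (hfb _ hz haz) hw hz)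

end StrongConcavity

section Perturbation

variable {E : Type*} [NormedAddCommGroup E] [NormedSpace ℝ E] {φ : E → ℝ}

lemma exists_strongConcaveOn_smul (hφ : ContDiff ℝ 2 φ) (hφc : HasCompactSupport φ) :
    ∃ C, ∀ t : ℝ, StrongConcaveOn univ (-(|t| * C)) (t • φ) := by
  have hcont : Continuous (fderiv ℝ (fderiv ℝ φ)) :=
    ((hφ.fderiv_right (m := 1) (by norm_num)).fderiv_right (m := 0) (by norm_num)).continuous
  have hsupp : HasCompactSupport (fderiv ℝ (fderiv ℝ φ)) := (hφc.fderiv ℝ).fderiv ℝ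
  obtain ⟨C, hC⟩ : ∃ C, ∀ z, ‖fderiv ℝ (fderiv ℝ φ) z‖ ≤ C :=
    hcont.bounded_above_of_compact_support (E := E →L[ℝ] E →L[ℝ] ℝ) hsupp
  refine ⟨C, fun t ↦ strongConcaveOn_of_fderiv_fderiv_le convex_univ
    (fun z _ ↦ (hφ.const_smul t).contDiffAt) fun z _ d ↦ ?_⟩
  calc fderiv ℝ (fderiv ℝ (t • φ)) z d d = t * fderiv ℝ (fderiv ℝ φ) z d d := by
        rw [fderiv_const_smul_field, fderiv_const_smul_field (F := E →L[ℝ] ℝ)]; rfl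
    _ ≤ |t| * (‖fderiv ℝ (fderiv ℝ φ) z‖ * ‖d‖ * ‖d‖) := by
        refine (le_abs_self _).trans ?_
        rw [abs_mul]
        gcongr
        exact ContinuousLinearMap.le_opNorm₂ (fderiv ℝ (fderiv ℝ φ) z) d d
    _ ≤ |t| * (C * ‖d‖ * ‖d‖) := by gcongr; exact hC z
    _ = -(-(|t| * C)) * ‖d‖ ^ 2 := by ring

lemma eventually_concaveOn_add_smul {s U : Set E} {u : E → ℝ} {m : ℝ} (hu : ConcaveOn ℝ s u)
    (hs : IsOpen s) (huU : StrongConcaveOn U m u) (hU : IsOpen U) (hm : 0 < m)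
    (hφ : ContDiff ℝ 2 φ) (hφc : HasCompactSupport φ) (hφU : tsupport φ ⊆ U) :
    ∀ᶠ t in 𝓝 (0 : ℝ), ConcaveOn ℝ s (u + t • φ) := by
  obtain ⟨C, hC⟩ := exists_strongConcaveOn_smul hφ hφc
  have hsmall : Tendsto (fun t : ℝ ↦ |t| * C) (𝓝 0) (𝓝 0) :=
    Continuous.tendsto' (by fun_prop) 0 0 (by simp)
  filter_upwards [hsmall.eventually_lt_const hm] with t ht
  refine concaveOn_of_forall_exists_mem_nhds hu.1 fun x hx ↦ ?_
  by_cases hxφ : x ∈ tsupport φ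
  · have hsmul : StrongConcaveOn U (-(|t| * C)) (t • φ) :=
      ⟨huU.1, fun y _ z _ ↦ (hC t).2 (mem_univ y) (mem_univ z)⟩
    refine ⟨U, hU.mem_nhds (hφU hxφ), (huU.add hsmul).concaveOn fun r ↦ ?_⟩
    have := mul_nonneg (sub_nonneg.2 ht.le) (sq_nonneg r)
    simp only [Pi.zero_apply, Pi.add_apply]
    linarith
  · obtain ⟨r, hr, hball⟩ := Metric.mem_nhds_iff.1
      (inter_mem (hs.mem_nhds hx) ((isClosed_tsupport φ).isOpen_compl.mem_nhds hxφ))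
    refine ⟨Metric.ball x r, Metric.ball_mem_nhds x hr,
      (hu.subset (fun z hz ↦ (hball hz).1) (convex_ball x r)).congr fun z hz ↦ ?_⟩
    simp [image_eq_zero_of_notMem_tsupport (hball hz).2]

lemma eventually_mapsTo_add_smul {X : Type*} [TopologicalSpace X] {u φ : X → ℝ} {s : Set X}
    {I : Set ℝ} (hu : MapsTo u s I) (hφ : Continuous φ) (hφc : HasCompactSupport φ)
    (huφ : ∀ x ∈ tsupport φ, ContinuousAt u x ∧ u x ∈ interior I) :
    ∀ᶠ t in 𝓝 (0 : ℝ), MapsTo (u + t • φ) s I := by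
  have hmem : ∀ᶠ t in 𝓝 (0 : ℝ), ∀ x ∈ tsupport φ, u x + t * φ x ∈ interior I := by
    refine hφc.eventually_forall_of_forall_eventually fun x hx ↦ ?_
    have hcont : Tendsto (fun z : ℝ × X ↦ u z.2 + z.1 * φ z.2) (𝓝 (0, x)) (𝓝 (u x)) := by
      have hux : ContinuousAt (fun z : ℝ × X ↦ u z.2) (0, x) :=
        ContinuousAt.comp (f := Prod.snd) (huφ x hx).1 continuousAt_snd
      simpa using hux.tendsto.add (Continuous.tendsto (f := fun z : ℝ × X ↦ z.1 * φ z.2)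
        (by fun_prop) (0, x))
    exact hcont.eventually_mem (isOpen_interior.mem_nhds (huφ x hx).2)
  filter_upwards [hmem] with t ht x hx
  by_cases hxφ : x ∈ tsupport φ
  · exact interior_subset (ht x hxφ)
  · simpa [image_eq_zero_of_notMem_tsupport hxφ] using hu hx

end Perturbation

section SecondDifference

variable {V : Type*} [NormedAddCommGroup V] [NormedSpace ℝ V] {f : V → ℝ} {p q : V}

lemma exists_isCoercive [FiniteDimensional ℝ V] : ∃ B : V →L[ℝ] V →L[ℝ] ℝ, IsCoercive B :=
  let T : V →L[ℝ] EuclideanSpace ℝ (Fin (Module.finrank ℝ V)) :=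
    (toEuclidean (E := V)).toContinuousLinearMap
  ⟨(innerSL ℝ).bilinearComp T T, isCoercive_of_forall_pos fun _ hv ↦
    real_inner_self_pos.2 (toEuclidean.map_ne_zero_iff.2 hv)⟩

lemma exists_form_eventually_fderiv_fderiv_le [FiniteDimensional ℝ V] (hf : ContDiffAt ℝ 2 f p)
    (hq : fderiv ℝ (fderiv ℝ f) p q q < 0) :
    ∃ B : V →L[ℝ] V →L[ℝ] ℝ, B q q < 0 ∧
      ∀ᶠ z in 𝓝 p, ∀ d, fderiv ℝ (fderiv ℝ f) z d d ≤ B d d := by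
  obtain ⟨G, C, hC, hG⟩ := exists_isCoercive (V := V)
  have hlim : Tendsto (fun ε : ℝ ↦ fderiv ℝ (fderiv ℝ f) p q q + ε * G q q) (𝓝[>] 0)
      (𝓝 (fderiv ℝ (fderiv ℝ f) p q q)) :=
    (Continuous.tendsto' (by fun_prop) 0 _ (by simp)).mono_left nhdsWithin_le_nhds
  obtain ⟨ε, hεq, hε⟩ := ((hlim.eventually_lt_const hq).and self_mem_nhdsWithin).exists
  have hε : 0 < ε := hε
  refine ⟨fderiv ℝ (fderiv ℝ f) p + ε • G, hεq, ?_⟩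
  filter_upwards [eventually_fderiv_fderiv_le_add_norm_sq hf (mul_pos hε hC)] with z hz d
  calc fderiv ℝ (fderiv ℝ f) z d d
      ≤ fderiv ℝ (fderiv ℝ f) p d d + ε * (C * ‖d‖ * ‖d‖) := (hz d).trans_eq (by ring)
    _ ≤ fderiv ℝ (fderiv ℝ f) p d d + ε * G d d := by gcongr; exact hG d

lemma eventually_add_sub_le_of_fderiv_fderiv_le {B : V →L[ℝ] V →L[ℝ] ℝ} (hf : ContDiffAt ℝ 2 f p)
    (hB : ∀ᶠ z in 𝓝 p, ∀ d, fderiv ℝ (fderiv ℝ f) z d d ≤ B d d) :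
    ∀ᶠ z in 𝓝 (p, (0 : V)), f (z.1 + z.2) + f (z.1 - z.2) ≤ 2 * f z.1 + B z.2 z.2 := by
  obtain ⟨r, hr, hball⟩ := Metric.eventually_nhds_iff_ball.1 ((hf.eventually (by simp)).and hB)
  have hadd : Tendsto (fun z : V × V ↦ z.1 + z.2) (𝓝 (p, 0)) (𝓝 p) :=
    Continuous.tendsto' (by fun_prop) _ _ (add_zero p)
  have hsub : Tendsto (fun z : V × V ↦ z.1 - z.2) (𝓝 (p, 0)) (𝓝 p) :=
    Continuous.tendsto' (by fun_prop) _ _ (sub_zero p)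
  filter_upwards [hadd (Metric.ball_mem_nhds p hr), hsub (Metric.ball_mem_nhds p hr)]
    with z hz₁ hz₂
  have hseg := (convex_ball p r).segment_subset hz₂ hz₁
  exact add_sub_le_of_fderiv_fderiv_le (fun y hy ↦ (hball y (hseg hy)).1)
    fun y hy ↦ (hball y (hseg hy)).2 z.2

end SecondDifference

section OscillatingTestFunctions

lemma integrable_sq_of_hasCompactSupport {X : Type*} [TopologicalSpace X] [MeasurableSpace X]
    [OpensMeasurableSpace X] {μ : Measure X} [IsFiniteMeasureOnCompacts μ] {η : X → ℝ}
    (hη : Continuous η) (hηc : HasCompactSupport η) : Integrable (fun x ↦ η x ^ 2) μ :=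
  (hη.pow 2).integrable_of_hasCompactSupport
    (hηc.mono (Function.support_pow η two_ne_zero).subset)

variable {E : Type*} [NormedAddCommGroup E] [NormedSpace ℝ E]
  {B : StrongDual ℝ E →L[ℝ] StrongDual ℝ E →L[ℝ] ℝ} {ℓ : StrongDual ℝ E} {η : E → ℝ}

lemma fderiv_mul_comp_clm {x : E} {h : ℝ → ℝ} {h' : ℝ} (hη : DifferentiableAt ℝ η x)
    (hh : HasDerivAt h h' (ℓ x)) :
    fderiv ℝ (fun y ↦ η y * h (ℓ y)) x = (η x * h') • ℓ + h (ℓ x) • fderiv ℝ η x := by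
  rw [mul_smul]
  exact (hη.hasFDerivAt.mul (hh.comp_hasFDerivAt x ℓ.hasFDerivAt)).fderiv

-- The cross terms in `B ℓ (Dη)` and `B (Dη) ℓ` have opposite signs for sine and cosine and cancel.
lemma form_fderiv_mul_sin_add_form_fderiv_mul_cos (B : StrongDual ℝ E →L[ℝ] StrongDual ℝ E →L[ℝ] ℝ)
    (ℓ : StrongDual ℝ E) {x : E} (hη : DifferentiableAt ℝ η x) :
    B (fderiv ℝ (fun y ↦ η y * Real.sin (ℓ y)) x) (fderiv ℝ (fun y ↦ η y * Real.sin (ℓ y)) x) +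
      B (fderiv ℝ (fun y ↦ η y * Real.cos (ℓ y)) x) (fderiv ℝ (fun y ↦ η y * Real.cos (ℓ y)) x) =
    B (fderiv ℝ η x) (fderiv ℝ η x) + B ℓ ℓ * η x ^ 2 := by
  rw [fderiv_mul_comp_clm hη (Real.hasDerivAt_sin _),
    fderiv_mul_comp_clm hη (Real.hasDerivAt_cos _)]
  simp only [map_add, map_smul, add_apply, smul_apply, smul_eq_mul]
  linear_combination (B (fderiv ℝ η x) (fderiv ℝ η x) + B ℓ ℓ * η x ^ 2) *
    Real.sin_sq_add_cos_sq (ℓ x)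

variable [MeasurableSpace E] [OpensMeasurableSpace E] {μ : Measure E} [IsFiniteMeasureOnCompacts μ]

lemma integrable_form_fderiv {φ : E → ℝ} {n : WithTop ℕ∞} (hn : n ≠ 0) (hφ : ContDiff ℝ n φ)
    (hφc : HasCompactSupport φ) : Integrable (fun x ↦ B (fderiv ℝ φ x) (fderiv ℝ φ x)) μ := by
  have hcont : Continuous (fderiv ℝ φ) := hφ.continuous_fderiv hn
  exact Continuous.integrable_of_hasCompactSupport (by fun_prop)
    ((hφc.fderiv ℝ).comp_left (g := fun p ↦ B p p) (by simp))

lemma exists_integral_form_fderiv_neg {n : ℕ∞} (hn : n ≠ 0) (hℓ : B ℓ ℓ < 0) (hη : ContDiff ℝ n η)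
    (hηc : HasCompactSupport η) (hημ : 0 < ∫ x, η x ^ 2 ∂μ) :
    ∃ φ : E → ℝ, ContDiff ℝ n φ ∧ tsupport φ ⊆ tsupport η ∧
      ∫ x, B (fderiv ℝ φ x) (fderiv ℝ φ x) ∂μ < 0 := by
  have hn' : (n : WithTop ℕ∞) ≠ 0 := by exact_mod_cast hn
  let I (φ : E → ℝ) : ℝ := ∫ x, B (fderiv ℝ φ x) (fderiv ℝ φ x) ∂μ
  have hlim : Tendsto (fun k : ℝ ↦ I η + k ^ 2 * (B ℓ ℓ * ∫ x, η x ^ 2 ∂μ)) atTop atBot :=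
    tendsto_atBot_add_const_left _ _ ((tendsto_pow_atTop two_ne_zero).atTop_mul_const_of_neg
      (mul_neg_of_neg_of_pos hℓ hημ))
  obtain ⟨k, hk⟩ := (hlim.eventually_lt_atBot 0).exists
  let φ₁ (y : E) : ℝ := η y * Real.sin ((k • ℓ) y)
  let φ₂ (y : E) : ℝ := η y * Real.cos ((k • ℓ) y)
  have hφ₁ : ContDiff ℝ n φ₁ := hη.mul (Real.contDiff_sin.comp (k • ℓ).contDiff)
  have hφ₂ : ContDiff ℝ n φ₂ := hη.mul (Real.contDiff_cos.comp (k • ℓ).contDiff)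
  have hsum : I φ₁ + I φ₂ = I η + k ^ 2 * (B ℓ ℓ * ∫ x, η x ^ 2 ∂μ) := by
    have hη₂ : Integrable (fun x ↦ η x ^ 2) μ :=
      integrable_sq_of_hasCompactSupport hη.continuous hηc
    calc I φ₁ + I φ₂
        = ∫ x, B (fderiv ℝ η x) (fderiv ℝ η x) + B (k • ℓ) (k • ℓ) * η x ^ 2 ∂μ := by
          rw [← integral_add (integrable_form_fderiv hn' hφ₁ hηc.mul_right)
            (integrable_form_fderiv hn' hφ₂ hηc.mul_right)]
          exact integral_congr_ae (.of_forall fun x ↦ form_fderiv_mul_sin_add_form_fderiv_mul_cos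
            B (k • ℓ) (hη.differentiable hn' x))
      _ = I η + k ^ 2 * (B ℓ ℓ * ∫ x, η x ^ 2 ∂μ) := by
          rw [integral_add (integrable_form_fderiv hn' hη hηc) (hη₂.const_mul _),
            integral_const_mul]
          simp only [I, map_smul, smul_apply, smul_eq_mul]
          ring
  rcases lt_or_ge (I φ₁) 0 with hI | hI
  · exact ⟨φ₁, hφ₁, tsupport_mul_subset_left, hI⟩
  · exact ⟨φ₂, hφ₂, tsupport_mul_subset_left, by change I φ₂ < 0; linarith⟩

lemma exists_contDiff_integral_form_fderiv_neg [FiniteDimensional ℝ E] {x : E} {U : Set E}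
    (hx : x ∈ μ.support) (hU : U ∈ 𝓝 x) (hℓ : B ℓ ℓ < 0) :
    ∃ φ : E → ℝ, ContDiff ℝ 2 φ ∧ HasCompactSupport φ ∧ tsupport φ ⊆ U ∧
      ∫ y, B (fderiv ℝ φ y) (fderiv ℝ φ y) ∂μ < 0 := by
  obtain ⟨r, hr, hrU⟩ := Metric.nhds_basis_closedBall.mem_iff.1 hU
  let η : ContDiffBump x := ⟨r / 2, r, half_pos hr, half_lt_self hr⟩
  have hημ : 0 < ∫ y, η y ^ 2 ∂μ := by
    rw [integral_pos_iff_support_of_nonneg (fun y ↦ sq_nonneg (η y))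
      (integrable_sq_of_hasCompactSupport η.continuous η.hasCompactSupport)]
    have hsupp : (Function.support fun y ↦ η y ^ 2) = Metric.ball x r := by
      rw [← η.support_eq, Function.support_pow _ two_ne_zero]
    rw [hsupp]
    exact Measure.mem_support_iff_forall x |>.1 hx _ (Metric.ball_mem_nhds x hr)
  obtain ⟨φ, hφ, hφη, hneg⟩ :=
    exists_integral_form_fderiv_neg (n := 2) two_ne_zero hℓ η.contDiff η.hasCompactSupport hημ
  exact ⟨φ, hφ, η.hasCompactSupport.of_isClosed_subset (isClosed_tsupport φ) hφη,
    (hφη.trans η.tsupport_eq.subset).trans hrU, hneg⟩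

end OscillatingTestFunctions

section GradientEnergy

variable {E : Type*} [NormedAddCommGroup E] [NormedSpace ℝ E] {f : StrongDual ℝ E → ℝ}
  {u φ : E → ℝ} {x : E}

lemma fderiv_add_smul_of_differentiableAt_tsupport (hu : x ∈ tsupport φ → DifferentiableAt ℝ u x)
    (hφ : DifferentiableAt ℝ φ x) (t : ℝ) :
    fderiv ℝ (u + t • φ) x = fderiv ℝ u x + t • fderiv ℝ φ x := by
  by_cases hx : x ∈ tsupport φ
  · rw [fderiv_add (hu hx) (hφ.const_smul t), fderiv_const_smul hφ]
  · have hnear : u + t • φ =ᶠ[𝓝 x] u := by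
      filter_upwards [notMem_tsupport_iff_eventuallyEq.1 hx] with y hy
      simp [hy]
    rw [hnear.fderiv_eq, fderiv_of_notMem_tsupport ℝ hx, smul_zero, add_zero]

lemma eventually_comp_fderiv_add_smul_le {B : StrongDual ℝ E →L[ℝ] StrongDual ℝ E →L[ℝ] ℝ}
    (hφ : ContDiff ℝ 1 φ) (hφc : HasCompactSupport φ) (hu : ∀ x ∈ tsupport φ, ContDiffAt ℝ 1 u x)
    (hB : ∀ x ∈ tsupport φ, ∀ᶠ z in 𝓝 (fderiv ℝ u x, (0 : StrongDual ℝ E)),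
      f (z.1 + z.2) + f (z.1 - z.2) ≤ 2 * f z.1 + B z.2 z.2) :
    ∀ᶠ t in 𝓝 (0 : ℝ), ∀ x, f (fderiv ℝ (u + t • φ) x) + f (fderiv ℝ (u + (-t) • φ) x) ≤
      2 * f (fderiv ℝ u x) + t ^ 2 * B (fderiv ℝ φ x) (fderiv ℝ φ x) := by
  have hDφ : Continuous (fderiv ℝ φ) := hφ.continuous_fderiv one_ne_zero
  have hsupp : ∀ᶠ t in 𝓝 (0 : ℝ), ∀ x ∈ tsupport φ,
      f (fderiv ℝ u x + t • fderiv ℝ φ x) + f (fderiv ℝ u x - t • fderiv ℝ φ x) ≤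
        2 * f (fderiv ℝ u x) + B (t • fderiv ℝ φ x) (t • fderiv ℝ φ x) := by
    refine hφc.eventually_forall_of_forall_eventually fun x hx ↦ ?_
    have hDu : ContinuousAt (fun z : ℝ × E ↦ fderiv ℝ u z.2) (0, x) :=
      ContinuousAt.comp (f := Prod.snd) ((hu x hx).continuousAt_fderiv one_ne_zero) continuousAt_snd
    have htDφ : ContinuousAt (fun z : ℝ × E ↦ z.1 • fderiv ℝ φ z.2) (0, x) :=
      (continuous_fst.smul (hDφ.comp continuous_snd)).continuousAt
    have hlim : Tendsto (fun z : ℝ × E ↦ (fderiv ℝ u z.2, z.1 • fderiv ℝ φ z.2)) (𝓝 (0, x))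
        (𝓝 (fderiv ℝ u x, 0)) := by
      simpa using (hDu.prodMk htDφ).tendsto
    exact hlim.eventually (hB x hx)
  filter_upwards [hsupp] with t ht x
  have hadd : ∀ s, fderiv ℝ (u + s • φ) x = fderiv ℝ u x + s • fderiv ℝ φ x :=
    fderiv_add_smul_of_differentiableAt_tsupport
      (fun hx ↦ (hu x hx).differentiableAt one_ne_zero) (hφ.differentiable one_ne_zero x)
  rw [hadd, hadd, neg_smul, ← sub_eq_add_neg]
  by_cases hx : x ∈ tsupport φ
  · refine (ht x hx).trans_eq ?_
    simp only [map_smul, smul_apply, smul_eq_mul]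
    ring
  · simp [fderiv_of_notMem_tsupport ℝ hx, two_mul]

variable [MeasurableSpace E]

/-- The first-order functional `u ↦ ∫ f (Du) dμ`. The integrand takes the junk value `f 0` at points
where `u` is not differentiable. -/
noncomputable def gradientEnergy (f : StrongDual ℝ E → ℝ) (μ : Measure E) (u : E → ℝ) : ℝ :=
  ∫ x, f (fderiv ℝ u x) ∂μ

variable [OpensMeasurableSpace E] {μ : Measure E} [IsFiniteMeasure μ]

lemma integrable_comp_fderiv (hf : Continuous f) (hfb : ∃ C, ∀ p, ‖f p‖ ≤ C) (u : E → ℝ) :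
    Integrable (fun x ↦ f (fderiv ℝ u x)) μ :=
  let ⟨C, hC⟩ := hfb
  .of_bound (hf.measurable.comp (measurable_fderiv ℝ u)).aestronglyMeasurable C
    (.of_forall fun _ ↦ hC _)

lemma eventually_gradientEnergy_add_le (hf : Continuous f) (hfb : ∃ C, ∀ p, ‖f p‖ ≤ C)
    {B : StrongDual ℝ E →L[ℝ] StrongDual ℝ E →L[ℝ] ℝ} (hφ : ContDiff ℝ 1 φ)
    (hφc : HasCompactSupport φ) (hu : ∀ x ∈ tsupport φ, ContDiffAt ℝ 1 u x)
    (hB : ∀ x ∈ tsupport φ, ∀ᶠ z in 𝓝 (fderiv ℝ u x, (0 : StrongDual ℝ E)),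
      f (z.1 + z.2) + f (z.1 - z.2) ≤ 2 * f z.1 + B z.2 z.2) :
    ∀ᶠ t in 𝓝 (0 : ℝ), gradientEnergy f μ (u + t • φ) + gradientEnergy f μ (u + (-t) • φ) ≤
      2 * gradientEnergy f μ u + t ^ 2 * ∫ x, B (fderiv ℝ φ x) (fderiv ℝ φ x) ∂μ := by
  have hint := integrable_comp_fderiv (μ := μ) hf hfb
  filter_upwards [eventually_comp_fderiv_add_smul_le hφ hφc hu hB] with t ht
  have hint₂ := (hint u).const_mul 2
  have hintB : Integrable (fun x ↦ t ^ 2 * B (fderiv ℝ φ x) (fderiv ℝ φ x)) μ :=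
    (integrable_form_fderiv one_ne_zero hφ hφc).const_mul _
  simp only [gradientEnergy]
  rw [← integral_const_mul, ← integral_const_mul, ← integral_add (hint _) (hint _),
    ← integral_add hint₂ hintB]
  exact integral_mono ((hint _).add (hint _)) (hint₂.add hintB) ht

lemma exists_eventually_gradientEnergy_add_lt [FiniteDimensional ℝ E] {U : Set E}
    {ℓ : StrongDual ℝ E} (hf : ContDiff ℝ 2 f) (hfb : ∃ C, ∀ p, ‖f p‖ ≤ C)
    (hx : x ∈ μ.support) (hU : U ∈ 𝓝 x) (hu : ContDiffAt ℝ 1 u x)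
    (hℓ : fderiv ℝ (fderiv ℝ f) (fderiv ℝ u x) ℓ ℓ < 0) :
    ∃ φ : E → ℝ, ContDiff ℝ 2 φ ∧ HasCompactSupport φ ∧ tsupport φ ⊆ U ∧
      ∀ᶠ t in 𝓝[≠] (0 : ℝ), gradientEnergy f μ (u + t • φ) + gradientEnergy f μ (u + (-t) • φ) <
        2 * gradientEnergy f μ u := by
  obtain ⟨B, hBℓ, hB⟩ := exists_form_eventually_fderiv_fderiv_le hf.contDiffAt hℓ
  have hnear : ∀ᶠ y in 𝓝 x, ContDiffAt ℝ 1 u y ∧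
      ∀ᶠ z in 𝓝 (fderiv ℝ u y), ∀ d, fderiv ℝ (fderiv ℝ f) z d d ≤ B d d :=
    (hu.eventually (by simp)).and
      ((hu.continuousAt_fderiv one_ne_zero).eventually hB.eventually_nhds)
  obtain ⟨φ, hφ, hφc, hφU, hneg⟩ :=
    exists_contDiff_integral_form_fderiv_neg hx (inter_mem hU hnear) hBℓ
  refine ⟨φ, hφ, hφc, fun y hy ↦ (hφU hy).1, ?_⟩
  have hle := eventually_gradientEnergy_add_le (μ := μ) hf.continuous hfb (hφ.of_le one_le_two)
    hφc (fun y hy ↦ (hφU hy).2.1)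
    fun y hy ↦ eventually_add_sub_le_of_fderiv_fderiv_le hf.contDiffAt (hφU hy).2.2
  filter_upwards [nhdsWithin_le_nhds hle, self_mem_nhdsWithin] with t ht ht₀
  exact ht.trans_lt (add_lt_of_neg_right _ (mul_neg_of_pos_of_neg (sq_pos_of_ne_zero ht₀) hneg))

end GradientEnergy

section Minimizers

variable {E : Type*} [NormedAddCommGroup E] [NormedSpace ℝ E] [FiniteDimensional ℝ E]
  [MeasurableSpace E] [OpensMeasurableSpace E] {μ : Measure E} [IsFiniteMeasure μ]
  {f : StrongDual ℝ E → ℝ} {Ω : Set E} {u : E → ℝ} {a b : ℝ}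

lemma exists_gradientEnergy_lt_of_strongConcaveOn {s : Set E} {m : ℝ} {x : E} {ℓ : StrongDual ℝ E}
    (hf : ContDiff ℝ 2 f) (hfb : ∃ C, ∀ p, ‖f p‖ ≤ C) (hΩ : IsOpen Ω) (hu : ConcaveOn ℝ Ω u)
    (huI : MapsTo u Ω (Icc a b)) (hs : IsOpen s) (hm : 0 < m) (hus : StrongConcaveOn s m u)
    (hx : x ∈ s) (hxμ : x ∈ μ.support) (hxI : u x ∈ Ioo a b)
    (hux : ContDiffAt ℝ 1 u x) (hℓ : fderiv ℝ (fderiv ℝ f) (fderiv ℝ u x) ℓ ℓ < 0) :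
    ∃ v, ConcaveOn ℝ Ω v ∧ MapsTo v Ω (Icc a b) ∧ gradientEnergy f μ v < gradientEnergy f μ u := by
  have hcont : ContinuousOn u s := hus.concaveOn (fun r ↦ by positivity) |>.continuousOn hs
  have hU : s ∩ u ⁻¹' Ioo a b ∈ 𝓝 x :=
    (hcont.isOpen_inter_preimage hs isOpen_Ioo).mem_nhds ⟨hx, hxI⟩
  obtain ⟨φ, hφ, hφc, hφU, hlt⟩ := exists_eventually_gradientEnergy_add_lt hf hfb hxμ hU hux hℓ
  have hadm : ∀ᶠ t in 𝓝 (0 : ℝ), ConcaveOn ℝ Ω (u + t • φ) ∧ MapsTo (u + t • φ) Ω (Icc a b) :=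
    (eventually_concaveOn_add_smul hu hΩ hus hs hm hφ hφc fun y hy ↦ (hφU hy).1).and
      (eventually_mapsTo_add_smul huI hφ.continuous hφc fun y hy ↦
        ⟨hcont.continuousAt (hs.mem_nhds (hφU hy).1), by simpa using (hφU hy).2⟩)
  have hadm' : ∀ᶠ t in 𝓝 (0 : ℝ),
      ConcaveOn ℝ Ω (u + (-t) • φ) ∧ MapsTo (u + (-t) • φ) Ω (Icc a b) :=
    (Continuous.tendsto' continuous_neg (0 : ℝ) 0 neg_zero).eventually hadm
  obtain ⟨t, ht, hpos, hneg⟩ := (hlt.and (nhdsWithin_le_nhds (hadm.and hadm'))).exists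
  rcases lt_or_ge (gradientEnergy f μ (u + t • φ)) (gradientEnergy f μ u) with h | h
  · exact ⟨_, hpos.1, hpos.2, h⟩
  · exact ⟨_, hneg.1, hneg.2, by linarith⟩

theorem minimizer_hessian_degenerate_general (hf : ContDiff ℝ 2 f) (hfb : ∃ C, ∀ p, ‖f p‖ ≤ C)
    (hfneg : ∀ p, ∃ q, fderiv ℝ (fderiv ℝ f) p q q < 0) (hΩ : IsOpen Ω) (hu : ConcaveOn ℝ Ω u)
    (huI : MapsTo u Ω (Icc a b))
    (hmin : ∀ v, ConcaveOn ℝ Ω v → MapsTo v Ω (Icc a b) →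
      gradientEnergy f μ u ≤ gradientEnergy f μ v)
    {ω : Set E} (hω : IsOpen ω) (hωΩ : ω ⊆ Ω) (hωμ : ω ⊆ μ.support) (hreg : ContDiffOn ℝ 2 u ω) :
    ∀ x ∈ ω, ∃ v, v ≠ 0 ∧ ∀ w, iteratedFDeriv ℝ 2 u x ![v, w] = 0 := by
  intro x hx
  by_contra! hnd
  simp only [iteratedFDeriv_two_apply, Matrix.cons_val_zero, Matrix.cons_val_one] at hnd
  obtain ⟨r, hr, hball, m, hm, hstrong⟩ := exists_ball_strongConcaveOn hu
    (hΩ.mem_nhds (hωΩ hx)) (hreg.contDiffAt (hω.mem_nhds hx)) hnd (hω.mem_nhds hx)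
  have : Nontrivial E := by
    by_contra! _
    obtain ⟨q, hq⟩ := hfneg 0
    simp [Subsingleton.elim q 0] at hq
  have := Module.punctured_nhds_neBot ℝ E x
  obtain ⟨z, hz, hzI⟩ := exists_mem_Ioo_of_strictConcaveOn (hstrong.strictConcaveOn hm)
    (infinite_of_mem_nhds x (Metric.ball_mem_nhds x hr)).nontrivial
    (huI.mono_left (hball.trans hωΩ))
  have hzω : z ∈ ω := hball hz
  obtain ⟨q, hq⟩ := hfneg (fderiv ℝ u z)
  obtain ⟨v, hv, hvI, hlt⟩ := exists_gradientEnergy_lt_of_strongConcaveOn hf hfb hΩ hu huI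
    Metric.isOpen_ball hm hstrong hz (hωμ hzω) hzI
    ((hreg.contDiffAt (hω.mem_nhds hzω)).of_le one_le_two) hq
  exact (hmin v hv hvI).not_gt hlt

end Minimizers

section NewtonIntegrand

/-- The integrand of Newton's resistance functional as a function of the differential `Du`, which
has the same norm as the gradient. -/
noncomputable def newtonIntegrand {V : Type*} [NormedAddCommGroup V] (p : V) : ℝ :=
  1 / (‖p‖ ^ 2 + 1)

lemma norm_newtonIntegrand_le_one {V : Type*} [NormedAddCommGroup V] (p : V) :
    ‖newtonIntegrand p‖ ≤ 1 := by
  rw [newtonIntegrand, Real.norm_of_nonneg (by positivity)]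
  exact div_le_one_of_le₀ (by simp) (by positivity)

lemma fderiv_fderiv_newtonIntegrand_of_pythagorean {V : Type*} [NormedAddCommGroup V]
    [NormedSpace ℝ V] {p q : V} (hf : ContDiff ℝ 2 (newtonIntegrand : V → ℝ))
    (hpq : ∀ τ : ℝ, ‖p + τ • q‖ ^ 2 = ‖p‖ ^ 2 + τ ^ 2 * ‖q‖ ^ 2) :
    fderiv ℝ (fderiv ℝ newtonIntegrand) p q q = -(2 * ‖q‖ ^ 2) / (‖p‖ ^ 2 + 1) ^ 2 := by
  let D (τ : ℝ) : ℝ := ‖p‖ ^ 2 + τ ^ 2 * ‖q‖ ^ 2 + 1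
  have hD₀ : ∀ τ, D τ ≠ 0 := fun τ ↦ by positivity
  have hderiv : ∀ τ, HasDerivAt D (2 * τ * ‖q‖ ^ 2) τ := fun τ ↦ by
    simpa [D] using (hasDerivAt_pow 2 τ).mul_const (‖q‖ ^ 2)
  refine fderiv_fderiv_eq_of_hasDerivAt (g := fun τ ↦ -(2 * τ * ‖q‖ ^ 2) / D τ ^ 2) hf
    (fun τ ↦ ?_) ?_
  · simpa only [newtonIntegrand, hpq, one_div] using (hderiv τ).fun_inv (hD₀ τ)
  · have hnum : HasDerivAt (fun τ ↦ -(2 * τ * ‖q‖ ^ 2)) (-(2 * ‖q‖ ^ 2)) 0 := by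
      simpa using (((hasDerivAt_id (0 : ℝ)).const_mul 2).mul_const (‖q‖ ^ 2)).fun_neg
    refine (hnum.fun_div ((hderiv 0).fun_pow 2) (pow_ne_zero 2 (hD₀ 0))).congr_deriv ?_
    simp only [D]
    field_simp
    ring

variable {F : Type*} [NormedAddCommGroup F] [InnerProductSpace ℝ F]

lemma contDiff_newtonIntegrand [CompleteSpace F] {n : WithTop ℕ∞} :
    ContDiff ℝ n (newtonIntegrand : StrongDual ℝ F → ℝ) := by
  have hnorm : ContDiff ℝ n fun p : StrongDual ℝ F ↦ ‖p‖ ^ 2 := by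
    simpa [Function.comp_def] using
      (contDiff_norm_sq ℝ).comp (InnerProductSpace.toDual ℝ F).symm.contDiff
  exact contDiff_const.div (hnorm.add contDiff_const) fun p ↦ by positivity

lemma exists_ne_zero_inner_eq_zero (hF : 1 < Module.finrank ℝ F) (x : F) :
    ∃ y : F, y ≠ 0 ∧ inner ℝ x y = 0 := by
  have : FiniteDimensional ℝ F := Module.finite_of_finrank_pos (one_pos.trans hF)
  obtain ⟨y, hy, hy₀⟩ := Submodule.exists_mem_ne_zero_of_ne_bot
    (LinearMap.ker_ne_bot_of_finrank_lt (f := (innerₛₗ ℝ x : F →ₗ[ℝ] ℝ)) (by simpa using hF))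
  exact ⟨y, hy₀, hy⟩

lemma exists_fderiv_fderiv_newtonIntegrand_neg (hF : 1 < Module.finrank ℝ F)
    (p : StrongDual ℝ F) : ∃ q, fderiv ℝ (fderiv ℝ newtonIntegrand) p q q < 0 := by
  have : FiniteDimensional ℝ F := Module.finite_of_finrank_pos (one_pos.trans hF)
  let L := InnerProductSpace.toDual ℝ F
  obtain ⟨x, rfl⟩ := L.surjective p
  obtain ⟨y, hy, hxy⟩ := exists_ne_zero_inner_eq_zero hF x
  have hpyth : ∀ τ : ℝ, ‖L x + τ • L y‖ ^ 2 = ‖L x‖ ^ 2 + τ ^ 2 * ‖L y‖ ^ 2 := fun τ ↦ by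
    rw [show L x + τ • L y = L (x + τ • y) by simp, L.norm_map, L.norm_map, L.norm_map,
      norm_add_sq_real, inner_smul_right, hxy, norm_smul, mul_pow, Real.norm_eq_abs, sq_abs]
    ring
  refine ⟨L y, ?_⟩
  rw [fderiv_fderiv_newtonIntegrand_of_pythagorean contDiff_newtonIntegrand hpyth]
  have : 0 < ‖L y‖ := norm_pos_iff.2 (L.map_ne_zero_iff.2 hy)
  exact div_neg_of_neg_of_pos (by linarith [pow_pos this 2]) (by positivity)

lemma norm_gradient_eq_norm_fderiv_s5 [CompleteSpace F] (u : F → ℝ) (x : F) :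
    ‖gradient u x‖ = ‖fderiv ℝ u x‖ :=
  (InnerProductSpace.toDual ℝ F).symm.norm_map _

end NewtonIntegrand

lemma J_eq_gradientEnergy (u : EuclideanSpace ℝ (Fin 2) → ℝ) :
    J u = gradientEnergy newtonIntegrand (volume.restrict Omega) u := by
  simp only [J, gradientEnergy, newtonIntegrand, norm_gradient_eq_norm_fderiv_s5]

lemma subset_support_restrict_of_isOpen {X : Type*} [TopologicalSpace X] [MeasurableSpace X]
    [OpensMeasurableSpace X] {μ : Measure X} [μ.IsOpenPosMeasure] {s : Set X} (hs : IsOpen s) :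
    s ⊆ (μ.restrict s).support := by
  simpa [hs.interior_eq, Measure.support_eq_univ] using
    Measure.interior_inter_support (μ := μ) (s := s)

/-- On any open subset of `Ω` where a minimizer of Newton's problem is `C²`,
the Hessian is everywhere degenerate: at every point there is a nonzero vector
annihilated by the Hessian bilinear form `D²u(x)`. -/
theorem minimizer_hessian_degenerate (M : ℝ) (hM : 0 < M)
    (u : EuclideanSpace ℝ (Fin 2) → ℝ)
    (hu : ConcaveOn ℝ Omega u) (huM : ∀ x ∈ Omega, u x ∈ Icc 0 M)
    (hmin : ∀ v : EuclideanSpace ℝ (Fin 2) → ℝ,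
      ConcaveOn ℝ Omega v → (∀ x ∈ Omega, v x ∈ Icc 0 M) → J u ≤ J v)
    (ω : Set (EuclideanSpace ℝ (Fin 2))) (hω : IsOpen ω) (hωΩ : ω ⊆ Omega)
    (hreg : ContDiffOn ℝ 2 u ω) :
    ∀ x ∈ ω, ∃ v : EuclideanSpace ℝ (Fin 2), v ≠ 0 ∧
      ∀ w : EuclideanSpace ℝ (Fin 2), iteratedFDeriv ℝ 2 u x ![v, w] = 0 := by
  have : IsFiniteMeasure (volume.restrict Omega) :=
    isFiniteMeasure_restrict.2 measure_ball_lt_top.ne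
  simp only [J_eq_gradientEnergy] at hmin
  exact minimizer_hessian_degenerate_general contDiff_newtonIntegrand
    ⟨1, norm_newtonIntegrand_le_one⟩ (exists_fderiv_fderiv_newtonIntegrand_neg (by simp))
    Metric.isOpen_ball hu huM hmin hω hωΩ
    (hωΩ.trans (subset_support_restrict_of_isOpen Metric.isOpen_ball)) hreg
end
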